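/- Assume: (i) m¹ is a reversible measure for q; (ii) γ/π is irrational; (iii) there exists a probability measure μ on E* which is ergodic for Q and which is not mutually singular with m². If m¹ is an ergodic measure for q, then m² is an ergodic measure for Q. -/

import Mathlib

open MeasureTheory ProbabilityTheory Set Pointwise
open scoped ENNReal

noncomputable section

/-- The increasing affine map from `(-1,1)` onto the chord `E_u`. -/
def ellMap (γ u x : ℝ) : ℝ := -u * Real.cos γ + x * Real.sqrt (1 - u ^ 2 * Real.sin γ ^ 2)

/-- The inverse of `ellMap γ u`. -/
def ellInv (γ u y : ℝ) : ℝ := (y + u * Real.cos γ) / Real.sqrt (1 - u ^ 2 * Real.sin γ ^ 2)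

/-- The open elliptical region `E`. -/
def Eset (γ : ℝ) : Set (ℝ × ℝ) :=
  {p | p.1 ^ 2 + 2 * Real.cos γ * p.1 * p.2 + p.2 ^ 2 < 1}

/-- The state space `E* = E × {−1,1}`, realized inside `ℝ × ℝ × ℝ`. -/
def EstarSet (γ : ℝ) : Set (ℝ × ℝ × ℝ) :=
  {w | (w.1, w.2.1) ∈ Eset γ ∧ (w.2.2 = 1 ∨ w.2.2 = -1)}

/-- Uniform probability measure on `(-1,1)`. -/
def m1 : Measure ℝ := (2 : ℝ≥0∞)⁻¹ • volume.restrict (Ioo (-1 : ℝ) 1)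

/-- The probability measure `m²` on `E*`: normalized Lebesgue measure on `E` times
uniform measure on `{−1,1}`. -/
def m2 (γ : ℝ) : Measure (ℝ × ℝ × ℝ) :=
  ((((volume (Eset γ))⁻¹ • volume.restrict (Eset γ)).prod
      ((2 : ℝ≥0∞)⁻¹ • (Measure.dirac (1 : ℝ) + Measure.dirac (-1 : ℝ)))).map
    fun p => (p.1.1, p.1.2, p.2))

/-- `q` is a Markov kernel on `(-1,1)`. -/
def IsMarkovOnInterval (q : Kernel ℝ ℝ) : Prop :=
  IsMarkovKernel q ∧ ∀ x ∈ Ioo (-1 : ℝ) 1, q x (Ioo (-1 : ℝ) 1) = 1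

/-- The kernel `Q` of the alternating random walk, as a measure-valued function on the
state space. -/
def Qfun (γ : ℝ) (q : Kernel ℝ ℝ) : ℝ × ℝ × ℝ → Measure (ℝ × ℝ × ℝ) := fun w =>
  if w.2.2 = -1 then
    Measure.map (fun x => (ellMap γ w.2.1 x, w.2.1, (1 : ℝ))) (q (-ellInv γ w.2.1 w.1))
  else
    Measure.map (fun x => (w.1, ellMap γ w.1 x, (-1 : ℝ))) (q (-ellInv γ w.1 w.2.1))

/-- The kernel `Q†`. -/
def Qdag (γ : ℝ) (q : Kernel ℝ ℝ) : ℝ × ℝ × ℝ → Measure (ℝ × ℝ × ℝ) := fun w =>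
  if w.2.2 = 1 then
    Measure.map (fun x => (ellMap γ w.2.1 x, w.2.1, (-1 : ℝ)))
      ((q (ellInv γ w.2.1 w.1)).map (fun y => -y))
  else
    Measure.map (fun x => (w.1, ellMap γ w.1 x, (1 : ℝ)))
      ((q (ellInv γ w.1 w.2.1)).map (fun y => -y))

/-- Bounded continuous real-valued functions on a subset `S`. -/
def BddCtsOn {X : Type*} [TopologicalSpace X] (S : Set X) (f : X → ℝ) : Prop :=
  ContinuousOn f S ∧ ∃ C, ∀ x ∈ S, |f x| ≤ C

/-- `m¹` is a reversible measure for `q`. -/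
def Reversible1 (q : Kernel ℝ ℝ) : Prop :=
  ∀ j k : ℝ → ℝ, BddCtsOn (Ioo (-1 : ℝ) 1) j → BddCtsOn (Ioo (-1 : ℝ) 1) k →
    ∫ x, k x * ∫ y, j y ∂(q x) ∂m1 = ∫ x, j x * ∫ y, k y ∂(q x) ∂m1

/-- The `†`-operation on measure-valued functions on `(-1,1)`: `p†(x,A) := p(−x,−A)`. -/
def dag (p : ℝ → Measure ℝ) : ℝ → Measure ℝ := fun x => (p (-x)).map (fun y => -y)

/-- `m¹` is a `†`-reversible measure for `p`. -/
def DagReversible1 (p : ℝ → Measure ℝ) : Prop :=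
  ∀ j k : ℝ → ℝ, BddCtsOn (Ioo (-1 : ℝ) 1) j → BddCtsOn (Ioo (-1 : ℝ) 1) k →
    ∫ x, k x * ∫ y, j y ∂(p x) ∂m1 = ∫ x, j x * ∫ y, k y ∂(dag p x) ∂m1

/-- `m²` is a `†`-reversible measure for `Q`. -/
def DagReversible2 (γ : ℝ) (q : Kernel ℝ ℝ) : Prop :=
  ∀ f g : ℝ × ℝ × ℝ → ℝ, BddCtsOn (EstarSet γ) f → BddCtsOn (EstarSet γ) g →
    ∫ w, g w * ∫ w', f w' ∂(Qfun γ q w) ∂(m2 γ) =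
      ∫ w, f w * ∫ w', g w' ∂(Qdag γ q w) ∂(m2 γ)

/-- `μ` is an invariant measure for the transition function `p`. -/
def KInvariantMeasure {S : Type*} [MeasurableSpace S] (μ : Measure S) (p : S → Measure S) :
    Prop :=
  ∀ A : Set S, MeasurableSet A → ∫⁻ x, p x A ∂μ = μ A

/-- The set `A` is `(μ,p)`-invariant. -/
def KInvariantSet {S : Type*} [MeasurableSpace S] (μ : Measure S) (p : S → Measure S)
    (A : Set S) : Prop :=
  ∀ᵐ x ∂μ, x ∈ A → p x A = 1

/-- `μ` is an ergodic measure for the transition function `p`. -/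
def KErgodicMeasure {S : Type*} [MeasurableSpace S] (μ : Measure S) (p : S → Measure S) :
    Prop :=
  KInvariantMeasure μ p ∧
    ∀ A : Set S, MeasurableSet A → KInvariantSet μ p A → μ A = 0 ∨ μ A = 1

/-- The set `A` is `(μ,p)`-ergodic. -/
def KErgodicSet {S : Type*} [MeasurableSpace S] (μ : Measure S) (p : S → Measure S)
    (A : Set S) : Prop :=
  MeasurableSet A ∧ KInvariantSet μ p A ∧
    ∀ B : Set S, B ⊆ A → MeasurableSet B → KInvariantSet μ p B → μ B = 0 ∨ μ B = μ A

/-- `F⁺`: the slice of `F ⊆ E*` at `s = 1`. -/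
def Fplus (F : Set (ℝ × ℝ × ℝ)) : Set (ℝ × ℝ) := {p | (p.1, p.2, (1 : ℝ)) ∈ F}

/-- `F⁻`: the slice of `F ⊆ E*` at `s = −1`. -/
def Fminus (F : Set (ℝ × ℝ × ℝ)) : Set (ℝ × ℝ) := {p | (p.1, p.2, (-1 : ℝ)) ∈ F}

/-- `[G]^u ⊆ (−1,1)`. -/
def brU (γ : ℝ) (G : Set (ℝ × ℝ)) (u : ℝ) : Set ℝ :=
  {x | x ∈ Ioo (-1 : ℝ) 1 ∧ (u, ellMap γ u x) ∈ G}

/-- `[G]_v ⊆ (−1,1)`. -/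
def brV (γ : ℝ) (G : Set (ℝ × ℝ)) (v : ℝ) : Set ℝ :=
  {x | x ∈ Ioo (-1 : ℝ) 1 ∧ (ellMap γ v x, v) ∈ G}

/-- The map `T₀` on `E*`. -/
def T0 (γ : ℝ) (w : ℝ × ℝ × ℝ) : ℝ × ℝ × ℝ :=
  (-w.1 - 2 * w.2.1 * Real.cos γ, w.2.1, -w.2.2)

/-- The map `T₁` on `E*`. -/
def T1 (γ : ℝ) (w : ℝ × ℝ × ℝ) : ℝ × ℝ × ℝ :=
  (w.1, -w.2.1 - 2 * w.1 * Real.cos γ, -w.2.2)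

/-- The linear map `U_γ` taking `E` to the unit disk. -/
def Ugamma (γ : ℝ) (p : ℝ × ℝ) : ℝ × ℝ := (p.1 + p.2 * Real.cos γ, p.2 * Real.sin γ)

/-- `V(u,v,s) = s·|U_γ(u,v)|²`. -/
def Vfun (γ : ℝ) (w : ℝ × ℝ × ℝ) : ℝ :=
  w.2.2 * ((w.1 + w.2.1 * Real.cos γ) ^ 2 + (w.2.1 * Real.sin γ) ^ 2)

open scoped Topology

/-- On an interval where the derivative is bounded below, preimages of small sets are small. -/
lemma volume_preimage_le {f f' : ℝ → ℝ} {p r κ : ℝ} (hκ : 0 < κ) (hfm : Measurable f)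
    (hf : ∀ t ∈ Ioo p r, HasDerivAt f (f' t) t) (hf' : ∀ t ∈ Ioo p r, κ ≤ |f' t|)
    {S : Set ℝ} (hS : MeasurableSet S) :
    volume (f ⁻¹' S ∩ Ioo p r) ≤ ENNReal.ofReal κ⁻¹ * volume S := by
  have hinj : InjOn f (Ioo p r) := by
    have key : ∀ a ∈ Ioo p r, ∀ b ∈ Ioo p r, a < b → f a ≠ f b := by
      intro a ha b hb hab h
      have hsub : ∀ t ∈ Icc a b, t ∈ Ioo p r := fun t ht =>
        ⟨lt_of_lt_of_le ha.1 ht.1, lt_of_le_of_lt ht.2 hb.2⟩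
      obtain ⟨c, hc, hc0⟩ := exists_hasDerivAt_eq_zero (f := f) (f' := f') hab
        (fun t ht => (hf t (hsub t ht)).continuousAt.continuousWithinAt) h
        (fun t ht => hf t (hsub t (Ioo_subset_Icc_self ht)))
      have := hf' c (hsub c (Ioo_subset_Icc_self hc))
      rw [hc0, abs_zero] at this
      linarith
    intro a ha b hb h
    rcases lt_trichotomy a b with h1 | h1 | h1
    · exact absurd h (key a ha b hb h1)
    · exact h1
    · exact absurd h.symm (key b hb a ha h1)
  set T := f ⁻¹' S ∩ Ioo p r with hT
  have hTm : MeasurableSet T := (hfm hS).inter measurableSet_Ioo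
  have h1 := lintegral_image_eq_lintegral_abs_deriv_mul hTm
    (fun t ht => (hf t ht.2).hasDerivWithinAt) (hinj.mono inter_subset_right) (fun _ => 1)
  have h2 : ENNReal.ofReal κ * volume T ≤ volume S := by
    calc ENNReal.ofReal κ * volume T = ∫⁻ x in T, ENNReal.ofReal κ := by
          rw [setLIntegral_const]
      _ ≤ ∫⁻ x in T, ENNReal.ofReal (|f' x|) * 1 := by
          refine setLIntegral_mono' hTm fun x hx => ?_
          rw [mul_one]
          exact ENNReal.ofReal_le_ofReal (hf' x hx.2)
      _ = volume (f '' T) := by rw [← h1]; simp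
      _ ≤ volume S := by
          refine measure_mono ?_
          rintro _ ⟨x, hx, rfl⟩
          exact hx.1
  calc volume T = ENNReal.ofReal κ⁻¹ * (ENNReal.ofReal κ * volume T) := by
        rw [← mul_assoc, ← ENNReal.ofReal_mul (by positivity), inv_mul_cancel₀ hκ.ne']
        simp
    _ ≤ _ := by gcongr

/-- `L¹`-continuity of compositions with a nonsingular family of maps. -/
lemma tendsto_comp_L1 {ν ρ : Measure ℝ} [IsFiniteMeasure ν] [IsFiniteMeasure ρ]
    {φ : ℝ → ℝ → ℝ} {x₀ : ℝ} (hφm : ∀ x, Measurable (φ x))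
    (hφ : ∀ᶠ x in 𝓝 x₀, ν.map (φ x) ≤ ρ)
    (hc : ∀ᵐ v ∂ν, Filter.Tendsto (fun x => φ x v) (𝓝 x₀) (𝓝 (φ x₀ v)))
    {H : ℝ → ℝ} (hH : Measurable H) (hb : ∀ y, |H y| ≤ 1) :
    Filter.Tendsto (fun x => ∫ v, |H (φ x v) - H (φ x₀ v)| ∂ν) (𝓝 x₀) (𝓝 0) := by
  have hHi : ∀ (μ : Measure ℝ) [IsFiniteMeasure μ] (ψ : ℝ → ℝ), Measurable ψ →
      Integrable (fun y => H (ψ y)) μ := fun μ _ ψ hψ =>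
    Integrable.of_bound (hH.comp hψ).aestronglyMeasurable 1 (Filter.Eventually.of_forall
      fun y => by simpa using hb (ψ y))
  rw [Metric.tendsto_nhds]
  intro ε hε
  obtain ⟨g, hg, hgi⟩ := (hHi ρ id measurable_id).exists_boundedContinuous_integral_sub_le
    (ε := ε / 4) (by positivity)
  simp only [id] at hg
  have hgI : ∀ (μ : Measure ℝ) [IsFiniteMeasure μ] (ψ : ℝ → ℝ), Measurable ψ →
      Integrable (fun y => g (ψ y)) μ := fun μ _ ψ hψ =>
    Integrable.of_bound (g.continuous.measurable.comp hψ).aestronglyMeasurable ‖g‖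
      (Filter.Eventually.of_forall fun y => g.norm_coe_le_norm _)
  have hbd : ∀ x, ν.map (φ x) ≤ ρ → ∫ v, |H (φ x v) - g (φ x v)| ∂ν ≤ ε / 4 := by
    intro x hx
    have hmeas : Measurable (fun y => |H y - g y|) :=
      (hH.sub g.continuous.measurable).abs
    rw [← integral_map (φ := φ x) (f := fun y => |H y - g y|) (hφm x).aemeasurable
      hmeas.aestronglyMeasurable]
    refine le_trans ?_ hg
    refine integral_mono_measure hx (Filter.Eventually.of_forall fun y => abs_nonneg _) ?_
    exact (((hHi ρ id measurable_id).sub (hgI ρ id measurable_id)).abs)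
  have hx0 := hbd x₀ hφ.self_of_nhds
  have hgt : Filter.Tendsto (fun x => ∫ v, |g (φ x v) - g (φ x₀ v)| ∂ν) (𝓝 x₀) (𝓝 0) := by
    have : (0 : ℝ) = ∫ v, (0 : ℝ) ∂ν := by simp
    rw [this]
    refine tendsto_integral_filter_of_dominated_convergence (fun _ => 2 * ‖g‖) ?_ ?_ ?_ ?_
    · refine Filter.Eventually.of_forall fun x => ?_
      exact (((hgI ν _ (hφm x)).sub (hgI ν _ (hφm x₀))).abs).aestronglyMeasurable
    · refine Filter.Eventually.of_forall fun x => Filter.Eventually.of_forall fun v => ?_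
      rw [Real.norm_eq_abs, abs_abs]
      have h1 := g.norm_coe_le_norm (φ x v)
      have h2 := g.norm_coe_le_norm (φ x₀ v)
      rw [← Real.norm_eq_abs]
      exact (norm_sub_le _ _).trans (by linarith)
    · exact integrable_const _
    · filter_upwards [hc] with v hv
      have h1 : Filter.Tendsto (fun x => g (φ x v)) (𝓝 x₀) (𝓝 (g (φ x₀ v))) :=
        (g.continuous.tendsto _).comp hv
      have h2 := (h1.sub_const (g (φ x₀ v))).abs
      simpa using h2
  filter_upwards [hφ, (Metric.tendsto_nhds.1 hgt) (ε / 4) (by positivity)] with x hx hgx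
  rw [Real.dist_eq, sub_zero] at hgx ⊢
  have hx1 := hbd x hx
  have e1 : Integrable (fun v => |H (φ x v) - g (φ x v)|) ν :=
    ((hHi ν _ (hφm x)).sub (hgI ν _ (hφm x))).abs
  have e2 : Integrable (fun v => |H (φ x₀ v) - g (φ x₀ v)|) ν :=
    ((hHi ν _ (hφm x₀)).sub (hgI ν _ (hφm x₀))).abs
  have e3 : Integrable (fun v => |g (φ x v) - g (φ x₀ v)|) ν :=
    ((hgI ν _ (hφm x)).sub (hgI ν _ (hφm x₀))).abs
  have e4 : Integrable (fun v => |H (φ x v) - H (φ x₀ v)|) ν :=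
    ((hHi ν _ (hφm x)).sub (hHi ν _ (hφm x₀))).abs
  have key : ∫ v, |H (φ x v) - H (φ x₀ v)| ∂ν ≤ (∫ v, |H (φ x v) - g (φ x v)| ∂ν) +
      (∫ v, |g (φ x v) - g (φ x₀ v)| ∂ν) + ∫ v, |H (φ x₀ v) - g (φ x₀ v)| ∂ν := by
    have e13 : Integrable (fun v => |H (φ x v) - g (φ x v)| + |g (φ x v) - g (φ x₀ v)|) ν :=
      e1.add e3
    rw [← integral_add e1 e3, ← integral_add e13 e2]
    refine integral_mono e4 (e13.add e2) fun v => ?_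
    simp only [Pi.add_apply]
    calc |H (φ x v) - H (φ x₀ v)| = |(H (φ x v) - g (φ x v)) + (g (φ x v) - g (φ x₀ v))
          - (H (φ x₀ v) - g (φ x₀ v))| := by ring_nf
      _ ≤ _ := (abs_sub _ _).trans (by gcongr; exact abs_add_le _ _)
  rw [abs_of_nonneg (integral_nonneg fun _ => abs_nonneg _)] at hgx ⊢
  linarith

/-- A locally (a.e.) constant set on a preconnected set is null or conull there. -/
lemma null_or_conull_of_locally {X : Type*} [TopologicalSpace X] [SecondCountableTopology X]
    [MeasurableSpace X] {μ : Measure X} [μ.IsOpenPosMeasure] {Ω S : Set X}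
    (hΩo : IsOpen Ω) (hΩ : IsPreconnected Ω)
    (h : ∀ p ∈ Ω, ∃ U ∈ 𝓝 p, μ (U ∩ S) = 0 ∨ μ (U \ S) = 0) :
    μ (Ω ∩ S) = 0 ∨ μ (Ω \ S) = 0 := by
  let W (S : Set X) : Set X := {p | ∃ U ∈ 𝓝 p, μ (U ∩ S) = 0}
  have hWo : ∀ S, IsOpen (W S) := by
    intro S
    rw [isOpen_iff_mem_nhds]
    rintro p ⟨U, hU, hU0⟩
    filter_upwards [eventually_mem_nhds_iff.2 hU] with y hy using ⟨U, hy, hU0⟩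
  have hnull : ∀ S, Ω ⊆ W S → μ (Ω ∩ S) = 0 := by
    intro S hsub
    refine measure_null_of_locally_null _ ?_
    rintro p ⟨hp, hpS⟩
    obtain ⟨U, hU, hU0⟩ := hsub hp
    refine ⟨U ∩ (Ω ∩ S), Filter.inter_mem (mem_nhdsWithin_of_mem_nhds hU) self_mem_nhdsWithin,
      measure_mono_null (by intro y hy; exact ⟨hy.1, hy.2.2⟩) hU0⟩
  have hcov : Ω ⊆ W S ∪ W Sᶜ := by
    intro p hp
    obtain ⟨U, hU, h1 | h1⟩ := h p hp
    · exact Or.inl ⟨U, hU, h1⟩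
    · exact Or.inr ⟨U, hU, by rwa [← sdiff_eq]⟩
  by_cases ha : (Ω ∩ W S).Nonempty
  · by_cases hb : (Ω ∩ W Sᶜ).Nonempty
    · obtain ⟨p, hp, ⟨U, hU, hU0⟩, ⟨V, hV, hV0⟩⟩ := hΩ _ _ (hWo S) (hWo Sᶜ) hcov ha hb
      exfalso
      have h1 : 0 < μ (U ∩ V) := Measure.measure_pos_of_mem_nhds μ (Filter.inter_mem hU hV)
      have h2 : μ (U ∩ V) = 0 := by
        refine measure_mono_null (t := (U ∩ S) ∪ (V ∩ Sᶜ)) ?_ (measure_union_null hU0 hV0)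
        intro y hy
        by_cases hyS : y ∈ S
        · exact Or.inl ⟨hy.1, hyS⟩
        · exact Or.inr ⟨hy.2, hyS⟩
      exact h1.ne' h2
    · left
      refine hnull S fun p hp => (hcov hp).resolve_right fun hh => hb ⟨p, hp, hh⟩
  · right
    rw [sdiff_eq]
    refine hnull Sᶜ fun p hp => (hcov hp).resolve_left fun hh => ha ⟨p, hp, hh⟩

instance m1_prob : IsProbabilityMeasure m1 := by
  constructor
  rw [m1, Measure.smul_apply, Measure.restrict_apply_univ, Real.volume_Ioo]
  norm_num
  exact ENNReal.inv_mul_cancel (by simp) (by simp)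

/-- Detailed balance for measurable sets. -/
lemma rev_sets {q : Kernel ℝ ℝ} [IsMarkovKernel q] (hrev : Reversible1 q) {C D : Set ℝ}
    (hC : MeasurableSet C) (hD : MeasurableSet D) :
    ∫⁻ x in D, q x C ∂m1 = ∫⁻ x in C, q x D ∂m1 := by
  have h : m1 ⊗ₘ q = (m1 ⊗ₘ q).map Prod.swap := by
    refine Measure.ext_of_integral_mul_boundedContinuousFunction fun f g => ?_
    have hint : ∀ f g : BoundedContinuousFunction ℝ ℝ,
        Integrable (fun p : ℝ × ℝ => f p.1 * g p.2) (m1 ⊗ₘ q) := by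
      intro f g
      refine Integrable.of_bound (by fun_prop) (‖f‖ * ‖g‖) (Filter.Eventually.of_forall fun p => ?_)
      rw [norm_mul]
      exact mul_le_mul (f.norm_coe_le_norm _) (g.norm_coe_le_norm _) (norm_nonneg _)
        (norm_nonneg _)
    have hb : ∀ f : BoundedContinuousFunction ℝ ℝ, BddCtsOn (Ioo (-1 : ℝ) 1) f := fun f =>
      ⟨f.continuous.continuousOn, ‖f‖, fun x _ => by
        simpa [Real.norm_eq_abs] using f.norm_coe_le_norm x⟩
    rw [integral_map measurable_swap.aemeasurable (by fun_prop)]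
    have e : (fun p : ℝ × ℝ => f p.swap.1 * g p.swap.2) = fun p => g p.1 * f p.2 := by
      ext p; simp [mul_comm]
    rw [e, Measure.integral_compProd (hint f g), Measure.integral_compProd (hint g f)]
    simp only [integral_const_mul]
    exact hrev g f (hb g) (hb f)
  have h2 : (m1 ⊗ₘ q) (D ×ˢ C) = ((m1 ⊗ₘ q).map Prod.swap) (D ×ˢ C) := by
    conv_lhs => rw [h]
  rw [Measure.map_apply measurable_swap (hD.prod hC), preimage_swap_prod,
    Measure.compProd_apply_prod hD hC, Measure.compProd_apply_prod hC hD] at h2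
  exact h2

/-- `q 1_C = 1_D` almost everywhere. -/
def QPair (q : Kernel ℝ ℝ) (C D : Set ℝ) : Prop :=
  ∀ᵐ x ∂m1, q x C = D.indicator 1 x

lemma QPair.measure_eq {q : Kernel ℝ ℝ} (hinv : KInvariantMeasure m1 (fun x => q x))
    {C D : Set ℝ} (hC : MeasurableSet C) (hD : MeasurableSet D) (h : QPair q C D) :
    m1 C = m1 D := by
  rw [← hinv C hC, lintegral_congr_ae h, lintegral_indicator_one hD]

lemma QPair.symm {q : Kernel ℝ ℝ} [IsMarkovKernel q] (hrev : Reversible1 q)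
    (hinv : KInvariantMeasure m1 (fun x => q x))
    {C D : Set ℝ} (hC : MeasurableSet C) (hD : MeasurableSet D) (h : QPair q C D) :
    QPair q D C := by
  have hCD := h.measure_eq hinv hC hD
  have h1 : ∫⁻ x in C, q x D ∂m1 = m1 C := by
    rw [← rev_sets hrev hC hD, setLIntegral_congr_fun_ae hD (g := fun _ => 1), setLIntegral_const,
      one_mul, hCD]
    filter_upwards [h] with x hx hxD
    rw [hx, indicator_of_mem hxD, Pi.one_apply]
  have hm : Measurable fun x => q x D := q.measurable_coe hD
  have h2 : (C.indicator fun x => q x D) =ᵐ[m1] C.indicator 1 := by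
    refine ae_eq_of_ae_le_of_lintegral_le (Filter.Eventually.of_forall fun x => ?_) ?_ ?_ ?_
    · exact indicator_le_indicator (by simpa using prob_le_one)
    · rw [lintegral_indicator hC, h1]; exact measure_ne_top _ _
    · exact (measurable_one.indicator hC).aemeasurable
    · rw [lintegral_indicator_one hC, lintegral_indicator hC, h1]
  have h3 : (C.indicator fun x => q x D) =ᵐ[m1] fun x => q x D := by
    refine ae_eq_of_ae_le_of_lintegral_le (Filter.Eventually.of_forall fun x => ?_) ?_ ?_ ?_
    · exact indicator_le_self _ _ x
    · rw [lintegral_indicator hC, h1]; exact measure_ne_top _ _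
    · exact hm.aemeasurable
    · rw [lintegral_indicator hC, h1, hinv D hD, hCD]
  filter_upwards [h2, h3] with x hx hx'
  rw [← hx', hx]

lemma prob_inter_one {μ : Measure ℝ} [IsProbabilityMeasure μ] {S T : Set ℝ}
    (hT : MeasurableSet T) (hS : MeasurableSet S)
    (h1 : μ S = 1) (h2 : μ T = 1) : μ (S ∩ T) = 1 := by
  rw [← prob_compl_eq_zero_iff (hS.inter hT), compl_inter]
  exact measure_union_null ((prob_compl_eq_zero_iff hS).2 h1) ((prob_compl_eq_zero_iff hT).2 h2)

lemma prob_one_mono {μ : Measure ℝ} [IsProbabilityMeasure μ] {S T : Set ℝ}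
    (h : S ⊆ T) (h1 : μ S = 1) : μ T = 1 :=
  le_antisymm prob_le_one (h1 ▸ measure_mono h)

/-- Classification of pairs. -/
lemma QPair.cases {q : Kernel ℝ ℝ} [IsMarkovKernel q] (hrev : Reversible1 q)
    (herg : KErgodicMeasure m1 (fun x => q x))
    {C D : Set ℝ} (hC : MeasurableSet C) (hD : MeasurableSet D) (h : QPair q C D) :
    m1 C = 0 ∨ m1 C = 1 ∨ QPair q C Cᶜ := by
  have h' := h.symm hrev herg.1 hC hD
  have hU := herg.2 (C ∪ D) (hC.union hD) (by
    filter_upwards [h, h'] with x hx hx' hxU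
    rcases hxU with hx1 | hx1
    · rw [indicator_of_mem hx1, Pi.one_apply] at hx'
      exact prob_one_mono subset_union_right hx'
    · rw [indicator_of_mem hx1, Pi.one_apply] at hx
      exact prob_one_mono subset_union_left hx)
  have hI := herg.2 (C ∩ D) (hC.inter hD) (by
    filter_upwards [h, h'] with x hx hx' hxI
    rw [indicator_of_mem hxI.1, Pi.one_apply] at hx'
    rw [indicator_of_mem hxI.2, Pi.one_apply] at hx
    exact prob_inter_one hD hC hx hx')
  rcases hU with hU | hU
  · exact Or.inl (measure_mono_null subset_union_left hU)
  rcases hI with hI | hI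
  swap
  · exact Or.inr (Or.inl (prob_one_mono inter_subset_left hI))
  right; right
  have hU' : ∀ᵐ x ∂m1, x ∈ C ∪ D := by
    rw [ae_iff]; exact (prob_compl_eq_zero_iff (hC.union hD)).2 hU
  have hI' : ∀ᵐ x ∂m1, x ∉ C ∩ D := by
    rw [ae_iff]; simpa using hI
  filter_upwards [h, hU', hI'] with x hx hxU hxI
  rw [hx]
  by_cases hxC : x ∈ C
  · have hxD : x ∉ D := fun hxD => hxI ⟨hxC, hxD⟩
    rw [indicator_of_notMem hxD, indicator_of_notMem (by simpa using hxC)]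
  · have hxD : x ∈ D := hxU.resolve_left hxC
    rw [indicator_of_mem hxD, indicator_of_mem (by simpa using hxC)]

lemma QPair.compl_half {q : Kernel ℝ ℝ} (hinv : KInvariantMeasure m1 (fun x => q x))
    {C : Set ℝ} (hC : MeasurableSet C) (h : QPair q C Cᶜ) :
    m1.real C = 1 / 2 := by
  have h1 := h.measure_eq hinv hC hC.compl
  have h2 : m1.real C = m1.real Cᶜ := by simp only [measureReal_def, h1]
  rw [probReal_compl_eq_one_sub hC] at h2
  linarith

lemma QPair.unique {q : Kernel ℝ ℝ} [IsMarkovKernel q] (hrev : Reversible1 q)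
    (herg : KErgodicMeasure m1 (fun x => q x))
    {C B : Set ℝ} (hC : MeasurableSet C) (hB : MeasurableSet B) (h : QPair q C Cᶜ)
    (hb : QPair q B Bᶜ) :
    (∀ᵐ x ∂m1, x ∈ C ↔ x ∈ B) ∨ (∀ᵐ x ∂m1, x ∈ C ↔ x ∉ B) := by
  have h' := h.symm hrev herg.1 hC hC.compl
  have hb' := hb.symm hrev herg.1 hB hB.compl
  have hS := (hC.diff hB).union (hB.diff hC)
  have := herg.2 ((C \ B) ∪ (B \ C)) hS (by
    filter_upwards [h, h', hb, hb'] with x hx hx' hy hy' hxS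
    rcases hxS with ⟨h1, h2⟩ | ⟨h1, h2⟩
    · rw [indicator_of_mem h1, Pi.one_apply] at hx'
      rw [indicator_of_mem (by simpa using h2), Pi.one_apply] at hy
      refine prob_one_mono (S := B ∩ Cᶜ) ?_ (prob_inter_one hC.compl hB hy hx')
      intro y hy; exact Or.inr ⟨hy.1, hy.2⟩
    · rw [indicator_of_mem h1, Pi.one_apply] at hy'
      rw [indicator_of_mem (by simpa using h2), Pi.one_apply] at hx
      refine prob_one_mono (S := C ∩ Bᶜ) ?_ (prob_inter_one hB.compl hC hx hy')
      intro y hy; exact Or.inl ⟨hy.1, hy.2⟩)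
  rcases this with h0 | h0
  · left
    have h1 : ∀ᵐ x ∂m1, x ∉ (C \ B) ∪ (B \ C) := by
      rw [ae_iff]; simpa only [not_not, setOf_mem_eq] using h0
    filter_upwards [h1] with x hx
    simp only [mem_union, mem_sdiff] at hx
    tauto
  · right
    have h1 : ∀ᵐ x ∂m1, x ∈ (C \ B) ∪ (B \ C) := by
      rw [ae_iff]; exact (prob_compl_eq_zero_iff hS).2 h0
    filter_upwards [h1] with x hx
    simp only [mem_union, mem_sdiff] at hx
    tauto

/-- All sets arising in pairs are described by one function `c`. -/
lemma row_structure {q : Kernel ℝ ℝ} [IsMarkovKernel q] (hrev : Reversible1 q)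
    (herg : KErgodicMeasure m1 (fun x => q x)) :
    ∃ c : ℝ → ℝ, Measurable c ∧ (∀ x, |c x| ≤ 1) ∧
      ((∀ x, c x = 0) ∨ ((∀ x, c x = 1 ∨ c x = -1) ∧ m1.real {x | c x = 1} = 1 / 2)) ∧
      ∀ C D : Set ℝ, MeasurableSet C → MeasurableSet D → QPair q C D →
        ∀ᵐ x ∂m1, C.indicator 1 x = m1.real C + (∫ y in C, c y ∂m1) * c x := by
  have hz : ∀ C : Set ℝ, MeasurableSet C → m1 C = 0 → ∀ᵐ x ∂m1, x ∉ C := fun C _ h => by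
    rw [ae_iff]; simpa using h
  have ho : ∀ C : Set ℝ, MeasurableSet C → m1 C = 1 → ∀ᵐ x ∂m1, x ∈ C := fun C hC h => by
    rw [ae_iff]; exact (prob_compl_eq_zero_iff hC).2 h
  by_cases hex : ∃ B : Set ℝ, MeasurableSet B ∧ QPair q B Bᶜ
  · obtain ⟨B, hB, hBp⟩ := hex
    have hBh := hBp.compl_half herg.1 hB
    classical
    let c : ℝ → ℝ := fun x => if x ∈ B then 1 else -1
    have hcm : Measurable c := Measurable.ite hB measurable_const measurable_const
    have hc1 : ∀ x, c x = 1 ∨ c x = -1 := fun x => by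
      by_cases hx : x ∈ B <;> simp [c, hx]
    have hcB : {x | c x = 1} = B := by
      ext x
      by_cases hx : x ∈ B <;> simp [c, hx]
      norm_num
    have habs : ∀ x, |c x| ≤ 1 := fun x => by rcases hc1 x with h | h <;> simp [h]
    have hci : Integrable c m1 := Integrable.of_bound hcm.aestronglyMeasurable 1
      (Filter.Eventually.of_forall fun x => by simpa using habs x)
    have hIB : ∫ y in B, c y ∂m1 = 1 / 2 := by
      rw [setIntegral_congr_fun (g := fun _ => (1 : ℝ)) hB (fun x hx => by simp [c, hx])]
      simp [hBh]
    have hIBc : ∫ y in Bᶜ, c y ∂m1 = - (1 / 2) := by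
      rw [setIntegral_congr_fun (g := fun _ => (-1 : ℝ)) hB.compl
        (fun x hx => by have : x ∉ B := hx
                        simp [c, this])]
      have := probReal_compl_eq_one_sub (μ := m1) hB
      simp only [integral_const, measureReal_restrict_apply_univ, this, hBh, smul_eq_mul]
      norm_num
    have hI : ∫ y, c y ∂m1 = 0 := by
      rw [← integral_add_compl hB hci, hIB, hIBc]; norm_num
    refine ⟨c, hcm, habs, Or.inr ⟨hc1, by rw [hcB, hBh]⟩, fun C D hC hD hP => ?_⟩
    rcases hP.cases hrev herg hC hD with h | h | h
    · have e : m1.real C = 0 := by simp [measureReal_def, h]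
      filter_upwards [hz C hC h] with x hx
      rw [indicator_of_notMem hx, e, setIntegral_measure_zero _ h]; simp
    · have e : m1.real C = 1 := by simp [measureReal_def, h]
      have e2 : ∫ y in C, c y ∂m1 = 0 := by
        rw [Measure.restrict_eq_self_of_ae_mem (ho C hC h), hI]
      filter_upwards [ho C hC h] with x hx
      rw [indicator_of_mem hx, e, e2]; simp
    · have e := h.compl_half herg.1 hC
      rcases QPair.unique hrev herg hC hB h hBp with h1 | h1
      · have e2 : ∫ y in C, c y ∂m1 = 1 / 2 := by
          rw [← hIB]
          refine setIntegral_congr_set ?_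
          filter_upwards [h1] with x hx
          exact propext hx
        filter_upwards [h1] with x hx
        rw [e, e2]
        by_cases hxB : x ∈ B
        · rw [indicator_of_mem (hx.2 hxB)]; simp [c, hxB]; norm_num
        · rw [indicator_of_notMem (fun h => hxB (hx.1 h))]; simp [c, hxB]
      · have e2 : ∫ y in C, c y ∂m1 = -(1 / 2) := by
          rw [← hIBc]
          refine setIntegral_congr_set ?_
          filter_upwards [h1] with x hx
          exact propext hx
        filter_upwards [h1] with x hx
        rw [e, e2]
        by_cases hxB : x ∈ B
        · rw [indicator_of_notMem (fun h => hx.1 h hxB)]; simp [c, hxB]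
        · rw [indicator_of_mem (hx.2 hxB)]; simp [c, hxB]; norm_num
  · refine ⟨fun _ => 0, measurable_const, by simp, Or.inl fun _ => rfl, fun C D hC hD hP => ?_⟩
    rcases hP.cases hrev herg hC hD with h | h | h
    · have e : m1.real C = 0 := by simp [measureReal_def, h]
      filter_upwards [hz C hC h] with x hx
      rw [indicator_of_notMem hx, e]; simp
    · have e : m1.real C = 1 := by simp [measureReal_def, h]
      filter_upwards [ho C hC h] with x hx
      rw [indicator_of_mem hx, e]; simp
    · exact absurd ⟨C, hC, h⟩ hex

/-- Half-length of the chord. -/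
def Rad (γ u : ℝ) : ℝ := Real.sqrt (1 - u ^ 2 * Real.sin γ ^ 2)

lemma Rad_nonneg (γ u : ℝ) : 0 ≤ Rad γ u := Real.sqrt_nonneg _

lemma Rad_pos_iff {γ u : ℝ} : 0 < Rad γ u ↔ u ^ 2 * Real.sin γ ^ 2 < 1 := by
  rw [Rad, Real.sqrt_pos, sub_pos]

lemma Rad_sq {γ u : ℝ} (h : 0 < Rad γ u) : Rad γ u ^ 2 = 1 - u ^ 2 * Real.sin γ ^ 2 := by
  rw [Rad, Real.sq_sqrt]
  have := Rad_pos_iff.1 h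
  linarith

lemma measurable_Rad (γ : ℝ) : Measurable (Rad γ) := by unfold Rad; fun_prop

lemma ellInv_ellMap {γ u : ℝ} (h : 0 < Rad γ u) (x : ℝ) : ellInv γ u (ellMap γ u x) = x := by
  have h' : Real.sqrt (1 - u ^ 2 * Real.sin γ ^ 2) ≠ 0 := h.ne'
  unfold ellInv ellMap
  field_simp
  ring

lemma ellMap_ellInv {γ u : ℝ} (h : 0 < Rad γ u) (y : ℝ) : ellMap γ u (ellInv γ u y) = y := by
  have h' : Real.sqrt (1 - u ^ 2 * Real.sin γ ^ 2) ≠ 0 := h.ne'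
  unfold ellInv ellMap
  field_simp
  ring

lemma measurable_ellMap (γ : ℝ) : Measurable fun p : ℝ × ℝ => ellMap γ p.1 p.2 := by
  unfold ellMap; fun_prop

lemma measurable_ellInv (γ : ℝ) : Measurable fun p : ℝ × ℝ => ellInv γ p.1 p.2 := by
  unfold ellInv; fun_prop

lemma isOpen_Eset (γ : ℝ) : IsOpen (Eset γ) := by
  unfold Eset
  exact isOpen_lt (by fun_prop) (by fun_prop)

lemma Eset_swap {γ u v : ℝ} : (u, v) ∈ Eset γ ↔ (v, u) ∈ Eset γ := by
  simp only [Eset, mem_ofPred_eq]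
  constructor <;> intro h <;> linarith

lemma quad_eq (γ u v : ℝ) : u ^ 2 + 2 * Real.cos γ * u * v + v ^ 2 =
    (v + u * Real.cos γ) ^ 2 + u ^ 2 * Real.sin γ ^ 2 := by
  have := Real.sin_sq_add_cos_sq γ
  have h : Real.sin γ ^ 2 = 1 - Real.cos γ ^ 2 := by linarith
  rw [h]; ring

lemma Rad_pos_of_mem {γ u v : ℝ} (h : (u, v) ∈ Eset γ) : 0 < Rad γ u := by
  rw [Rad_pos_iff]
  have h' : u ^ 2 + 2 * Real.cos γ * u * v + v ^ 2 < 1 := h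
  rw [quad_eq] at h'
  nlinarith [sq_nonneg (v + u * Real.cos γ)]

lemma mem_Eset_ellMap {γ u x : ℝ} (h : 0 < Rad γ u) :
    (u, ellMap γ u x) ∈ Eset γ ↔ x ∈ Ioo (-1 : ℝ) 1 := by
  have h1 : u ^ 2 + 2 * Real.cos γ * u * ellMap γ u x + ellMap γ u x ^ 2 =
      x ^ 2 * Rad γ u ^ 2 + (1 - Rad γ u ^ 2) := by
    rw [quad_eq]
    have : ellMap γ u x + u * Real.cos γ = x * Rad γ u := by
      unfold ellMap Rad; ring
    have h3 := Rad_sq h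
    rw [this, mul_pow]; linarith
  have h2 : 0 < Rad γ u ^ 2 := by positivity
  have h3 : (u, ellMap γ u x) ∈ Eset γ ↔ x ^ 2 < 1 := by
    rw [Eset, mem_ofPred_eq]
    simp only
    rw [h1]
    constructor
    · intro h
      by_contra hx
      nlinarith
    · intro h
      nlinarith
  rw [h3, sq_lt_one_iff_abs_lt_one, abs_lt, mem_Ioo]

lemma section_Eset {γ u : ℝ} (h : 0 < Rad γ u) :
    {v | (u, v) ∈ Eset γ} = ellMap γ u '' Ioo (-1 : ℝ) 1 := by
  ext v
  constructor
  · intro hv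
    refine ⟨ellInv γ u v, ?_, ellMap_ellInv h v⟩
    rw [← mem_Eset_ellMap h, ellMap_ellInv h]
    exact hv
  · rintro ⟨x, hx, rfl⟩
    exact (mem_Eset_ellMap h).2 hx

/-- Disintegration of Lebesgue measure on `E` along columns. -/
lemma chord_lintegral (γ : ℝ) {F : ℝ × ℝ → ℝ≥0∞} (hF : Measurable F) :
    ∫⁻ p in Eset γ, F p =
      ∫⁻ u, ENNReal.ofReal (Rad γ u) * ∫⁻ x in Ioo (-1 : ℝ) 1, F (u, ellMap γ u x) := by
  have hE := (isOpen_Eset γ).measurableSet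
  rw [← lintegral_indicator hE, Measure.volume_eq_prod,
    lintegral_prod _ (hF.indicator hE).aemeasurable]
  refine lintegral_congr fun u => ?_
  rcases (Rad_nonneg γ u).lt_or_eq with h | h
  · have hs : MeasurableSet {v | (u, v) ∈ Eset γ} := measurable_prodMk_left hE
    have e : ∀ v, (Eset γ).indicator F (u, v) =
        {v | (u, v) ∈ Eset γ}.indicator (fun v => F (u, v)) v := by
      intro v
      by_cases hv : (u, v) ∈ Eset γ
      · rw [indicator_of_mem hv, indicator_of_mem (by exact hv)]
      · rw [indicator_of_notMem hv, indicator_of_notMem (by exact hv)]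
    simp_rw [e]
    rw [lintegral_indicator hs, section_Eset h,
      lintegral_image_eq_lintegral_abs_deriv_mul (f' := fun _ => Rad γ u) measurableSet_Ioo
        (fun x _ => ?_) ?_, lintegral_const_mul]
    · rw [abs_of_pos h]
    · exact hF.comp (measurable_const.prodMk
        ((measurable_ellMap γ).comp (measurable_const.prodMk measurable_id)))
    · intro x _ y _ hxy
      rw [← ellInv_ellMap h x, ← ellInv_ellMap h y, hxy]
    · unfold Rad
      have := ((hasDerivAt_id x).mul_const (Real.sqrt (1 - u ^ 2 * Real.sin γ ^ 2))).const_add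
        (-u * Real.cos γ)
      rw [one_mul] at this
      exact this.hasDerivWithinAt
  · have e : ∀ v, (Eset γ).indicator F (u, v) = 0 := by
      intro v
      refine indicator_of_notMem (fun hv => ?_) _
      exact absurd (Rad_pos_of_mem hv) (by rw [← h]; exact lt_irrefl _)
    simp [e, ← h]

lemma setLIntegral_Eset_swap (γ : ℝ) {F : ℝ × ℝ → ℝ≥0∞} (hF : Measurable F) :
    ∫⁻ p in Eset γ, F p = ∫⁻ p in Eset γ, F p.swap := by
  have hE := (isOpen_Eset γ).measurableSet
  have hpre : Prod.swap ⁻¹' Eset γ = Eset γ := by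
    ext ⟨u, v⟩; exact Eset_swap
  have := (Measure.measurePreserving_swap (μ := (volume : Measure ℝ))
    (ν := (volume : Measure ℝ))).setLIntegral_comp_preimage hE hF
  rw [hpre] at this
  simpa [Measure.volume_eq_prod] using this.symm

/-- Disintegration of Lebesgue measure on `E` along rows. -/
lemma chord_lintegral_row (γ : ℝ) {F : ℝ × ℝ → ℝ≥0∞} (hF : Measurable F) :
    ∫⁻ p in Eset γ, F p =
      ∫⁻ v, ENNReal.ofReal (Rad γ v) * ∫⁻ x in Ioo (-1 : ℝ) 1, F (ellMap γ v x, v) := by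
  rw [setLIntegral_Eset_swap γ hF]
  exact chord_lintegral γ (hF.comp measurable_swap)

lemma measurable_section_integral (γ : ℝ) {F : ℝ × ℝ → ℝ≥0∞} (hF : Measurable F) :
    Measurable fun u => ∫⁻ x in Ioo (-1 : ℝ) 1, F (u, ellMap γ u x) := by
  have h : Measurable fun p : ℝ × ℝ => F (p.1, ellMap γ p.1 p.2) :=
    hF.comp (measurable_fst.prodMk (measurable_ellMap γ))
  exact h.lintegral_prod_right'

lemma ae_m1_iff {P : ℝ → Prop} : (∀ᵐ x ∂m1, P x) ↔ ∀ᵐ x ∂volume.restrict (Ioo (-1 : ℝ) 1), P x := by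
  rw [m1, Measure.ae_ennreal_smul_measure_iff (by simp)]

/-- Almost everywhere statements on `E` via columns. -/
lemma chord_ae (γ : ℝ) {S : Set (ℝ × ℝ)} (hS : MeasurableSet S) :
    (∀ᵐ p ∂volume.restrict (Eset γ), p ∈ S) ↔
      ∀ᵐ u, 0 < Rad γ u → ∀ᵐ x ∂m1, (u, ellMap γ u x) ∈ S := by
  have hF : Measurable (Sᶜ.indicator (1 : ℝ × ℝ → ℝ≥0∞)) := measurable_one.indicator hS.compl
  have h1 : (∀ᵐ p ∂volume.restrict (Eset γ), p ∈ S) ↔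
      ∫⁻ p in Eset γ, Sᶜ.indicator 1 p = 0 := by
    rw [lintegral_indicator_one hS.compl]; rfl
  have hmm : Measurable fun u => ENNReal.ofReal (Rad γ u) *
      ∫⁻ x in Ioo (-1 : ℝ) 1, Sᶜ.indicator 1 (u, ellMap γ u x) :=
    (measurable_Rad γ).ennreal_ofReal.mul (measurable_section_integral γ hF)
  rw [h1, chord_lintegral γ hF, lintegral_eq_zero_iff hmm]
  refine Filter.eventually_congr (Filter.Eventually.of_forall fun u => ?_)
  have hm : MeasurableSet {x | (u, ellMap γ u x) ∈ S} :=
    (measurable_const.prodMk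
      ((measurable_ellMap γ).comp (measurable_const.prodMk measurable_id))) hS
  have h2 : (∫⁻ x in Ioo (-1 : ℝ) 1, Sᶜ.indicator 1 (u, ellMap γ u x)) =
      (volume.restrict (Ioo (-1 : ℝ) 1)) {x | (u, ellMap γ u x) ∈ S}ᶜ := by
    rw [← lintegral_indicator_one hm.compl]; rfl
  simp only [Pi.zero_apply, mul_eq_zero, ENNReal.ofReal_eq_zero, h2, ae_m1_iff]
  rw [← not_lt, imp_iff_not_or]
  rfl

lemma ae_Eset_swap (γ : ℝ) {S : Set (ℝ × ℝ)} (hS : MeasurableSet S) :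
    (∀ᵐ p ∂volume.restrict (Eset γ), p ∈ S) ↔
      (∀ᵐ p ∂volume.restrict (Eset γ), p.swap ∈ S) := by
  have hS' : MeasurableSet (Prod.swap ⁻¹' S) := measurable_swap hS
  have hF : Measurable (Sᶜ.indicator (1 : ℝ × ℝ → ℝ≥0∞)) := measurable_one.indicator hS.compl
  have h := setLIntegral_Eset_swap γ hF
  have e : ∀ p : ℝ × ℝ, Sᶜ.indicator (1 : ℝ × ℝ → ℝ≥0∞) p.swap =
    (Prod.swap ⁻¹' S)ᶜ.indicator 1 p := fun p => rfl
  simp_rw [e] at h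
  rw [lintegral_indicator_one hS.compl, lintegral_indicator_one hS'.compl] at h
  rw [ae_iff, ae_iff]
  exact Eq.congr_left h

/-- Almost everywhere statements on `E` via rows. -/
lemma chord_ae_row (γ : ℝ) {S : Set (ℝ × ℝ)} (hS : MeasurableSet S) :
    (∀ᵐ p ∂volume.restrict (Eset γ), p ∈ S) ↔
      ∀ᵐ v, 0 < Rad γ v → ∀ᵐ x ∂m1, (ellMap γ v x, v) ∈ S := by
  rw [ae_Eset_swap γ hS]
  exact chord_ae γ (S := Prod.swap ⁻¹' S) (measurable_swap hS)

lemma Eset_bounds {γ : ℝ} (hs : 0 < Real.sin γ) :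
    volume (Eset γ) ≠ 0 ∧ volume (Eset γ) ≠ ∞ := by
  constructor
  · refine ((isOpen_Eset γ).measure_pos volume ⟨(0, 0), ?_⟩).ne'
    simp [Eset]
  · have hsub : Eset γ ⊆ Icc (-(1 / Real.sin γ)) (1 / Real.sin γ) ×ˢ
        Icc (-(1 / Real.sin γ)) (1 / Real.sin γ) := by
      have key : ∀ u v : ℝ, (u, v) ∈ Eset γ → u ∈ Icc (-(1 / Real.sin γ)) (1 / Real.sin γ) := by
        intro u v h
        have := Rad_pos_iff.1 (Rad_pos_of_mem h)
        rw [← mul_pow, sq_lt_one_iff_abs_lt_one, abs_mul, abs_of_pos hs, ← lt_div_iff₀ hs] at this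
        exact abs_le.1 this.le
      rintro ⟨u, v⟩ h
      exact ⟨key u v h, key v u (Eset_swap.1 h)⟩
    refine ((measure_mono hsub).trans_lt ?_).ne
    exact (isCompact_Icc.prod isCompact_Icc).measure_lt_top

/-- Integration against `m²`. -/
lemma lintegral_m2 (γ : ℝ) {F : ℝ × ℝ × ℝ → ℝ≥0∞} (hF : Measurable F) :
    ∫⁻ w, F w ∂(m2 γ) = (volume (Eset γ))⁻¹ * (2⁻¹ *
      ((∫⁻ p in Eset γ, F (p.1, p.2, 1)) + ∫⁻ p in Eset γ, F (p.1, p.2, -1))) := by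
  have hm : Measurable fun p : (ℝ × ℝ) × ℝ => (p.1.1, p.1.2, p.2) := by fun_prop
  have hFm : Measurable fun p : (ℝ × ℝ) × ℝ => F (p.1.1, p.1.2, p.2) := hF.comp hm
  have h1 : Measurable fun p : ℝ × ℝ => F (p.1, p.2, 1) := hF.comp (by fun_prop)
  rw [m2, lintegral_map hF hm, lintegral_prod _ hFm.aemeasurable, lintegral_smul_measure,
    smul_eq_mul]
  simp only [lintegral_smul_measure, lintegral_add_measure, lintegral_dirac, smul_eq_mul]
  rw [lintegral_const_mul', lintegral_add_left h1]
  simp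

lemma measurePreserving_neg_m1 : MeasurePreserving (fun x : ℝ => -x) m1 m1 := by
  refine ⟨measurable_neg, ?_⟩
  have h : Measure.map (fun x : ℝ => -x) (volume.restrict (Ioo (-1 : ℝ) 1)) =
      volume.restrict (Ioo (-1 : ℝ) 1) := by
    have := ((Measure.measurePreserving_neg (volume : Measure ℝ)).restrict_preimage
      (measurableSet_Ioo (a := (-1 : ℝ)) (b := 1))).map_eq
    have e : (Neg.neg ⁻¹' Ioo (-1 : ℝ) 1) = Ioo (-1 : ℝ) 1 := by
      ext x; simp only [mem_preimage, mem_Ioo]; constructor <;> rintro ⟨h1, h2⟩ <;>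
        constructor <;> linarith
    rw [e] at this
    exact this
  rw [m1, Measure.map_smul, h]

lemma lintegral_Ioo_m1 (F : ℝ → ℝ≥0∞) : ∫⁻ x in Ioo (-1 : ℝ) 1, F x = 2 * ∫⁻ x, F x ∂m1 := by
  rw [m1, lintegral_smul_measure, smul_eq_mul, ← mul_assoc, ENNReal.mul_inv_cancel (by simp)
    (by simp), one_mul]

lemma measurable_step (γ : ℝ) {q : Kernel ℝ ℝ} [IsMarkovKernel q] {B : Set (ℝ × ℝ)}
    (hB : MeasurableSet B) :
    Measurable fun p : ℝ × ℝ => q (-ellInv γ p.1 p.2) {x | (p.1, ellMap γ p.1 x) ∈ B} := by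
  have hm : Measurable fun p : ℝ × ℝ => -ellInv γ p.1 p.2 := (measurable_ellInv γ).neg
  have hB' : MeasurableSet {r : (ℝ × ℝ) × ℝ | (r.1.1, ellMap γ r.1.1 r.2) ∈ B} := by
    have : Measurable fun r : (ℝ × ℝ) × ℝ => (r.1.1, ellMap γ r.1.1 r.2) :=
      (measurable_fst.fst).prodMk ((measurable_ellMap γ).comp
        ((measurable_fst.fst).prodMk measurable_snd))
    exact this hB
  have := Kernel.measurable_kernel_prodMk_left (κ := q.comap _ hm) hB'
  exact this

lemma measurableSet_col (γ u : ℝ) {B : Set (ℝ × ℝ)} (hB : MeasurableSet B) :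
    MeasurableSet {x | (u, ellMap γ u x) ∈ B} :=
  (measurable_const.prodMk
      ((measurable_ellMap γ).comp (measurable_const.prodMk measurable_id))) hB

/-- The column step preserves Lebesgue measure on `E`. -/
lemma step_invariant (γ : ℝ) {q : Kernel ℝ ℝ} [IsMarkovKernel q]
    (hinv : KInvariantMeasure m1 (fun x => q x)) {B : Set (ℝ × ℝ)} (hB : MeasurableSet B) :
    ∫⁻ p in Eset γ, q (-ellInv γ p.1 p.2) {x | (p.1, ellMap γ p.1 x) ∈ B} =
      ∫⁻ p in Eset γ, B.indicator 1 p := by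
  rw [chord_lintegral γ (measurable_step γ hB), chord_lintegral γ (measurable_one.indicator hB)]
  refine lintegral_congr fun u => ?_
  rcases (Rad_nonneg γ u).lt_or_eq with h | h
  swap
  · simp [← h]
  congr 1
  have hs := measurableSet_col γ u hB
  simp only [lintegral_Ioo_m1, ellInv_ellMap h]
  congr 1
  rw [measurePreserving_neg_m1.lintegral_comp (f := fun x => q x {x | (u, ellMap γ u x) ∈ B})
    (q.measurable_coe hs), hinv _ hs, ← lintegral_indicator_one hs]
  rfl

lemma measurable_slice (s : ℝ) {A : Set (ℝ × ℝ × ℝ)} (hA : MeasurableSet A) :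
    MeasurableSet {p : ℝ × ℝ | (p.1, p.2, s) ∈ A} := by
  have : Measurable fun p : ℝ × ℝ => (p.1, p.2, s) := by fun_prop
  exact this hA

lemma Qfun_one (γ : ℝ) (q : Kernel ℝ ℝ) {A : Set (ℝ × ℝ × ℝ)} (hA : MeasurableSet A) (u v : ℝ) :
    Qfun γ q (u, v, 1) A =
      q (-ellInv γ u v) {x | (u, ellMap γ u x) ∈ {p : ℝ × ℝ | (p.1, p.2, (-1 : ℝ)) ∈ A}} := by
  have h : ¬ ((1 : ℝ) = -1) := by norm_num
  simp only [Qfun, if_neg h]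
  rw [Measure.map_apply _ hA]
  · rfl
  · exact measurable_const.prodMk (((measurable_ellMap γ).comp
      (measurable_const.prodMk measurable_id)).prodMk measurable_const)

lemma Qfun_neg (γ : ℝ) (q : Kernel ℝ ℝ) {A : Set (ℝ × ℝ × ℝ)} (hA : MeasurableSet A) (u v : ℝ) :
    Qfun γ q (u, v, -1) A =
      q (-ellInv γ v u)
        {x | (v, ellMap γ v x) ∈ Prod.swap ⁻¹' {p : ℝ × ℝ | (p.1, p.2, (1 : ℝ)) ∈ A}} := by
  simp only [Qfun, if_true]
  rw [Measure.map_apply _ hA]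
  · rfl
  · exact ((measurable_ellMap γ).comp
      (measurable_const.prodMk measurable_id)).prodMk (measurable_const.prodMk measurable_const)

lemma Qfun_other (γ : ℝ) (q : Kernel ℝ ℝ) {A : Set (ℝ × ℝ × ℝ)} (hA : MeasurableSet A)
    (w : ℝ × ℝ × ℝ) : Qfun γ q w A = if w.2.2 = -1 then Qfun γ q (w.1, w.2.1, -1) A else
      Qfun γ q (w.1, w.2.1, 1) A := by
  have h : ¬ ((1 : ℝ) = -1) := by norm_num
  by_cases hw : w.2.2 = -1
  · rw [if_pos hw]; simp only [Qfun, if_pos hw, if_true]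
  · rw [if_neg hw]; simp only [Qfun, if_neg hw, if_neg h]

lemma measurable_Qfun (γ : ℝ) {q : Kernel ℝ ℝ} [IsMarkovKernel q] {A : Set (ℝ × ℝ × ℝ)}
    (hA : MeasurableSet A) : Measurable fun w => Qfun γ q w A := by
  have e := Qfun_other γ q hA
  simp_rw [Qfun_one γ q hA, Qfun_neg γ q hA] at e
  simp_rw [e]
  refine Measurable.ite ?_ ?_ ?_
  · exact (measurable_snd.snd) (measurableSet_singleton (-1 : ℝ))
  · exact (measurable_step γ (measurable_swap (measurable_slice 1 hA))).comp
      (g := fun p : ℝ × ℝ => q (-ellInv γ p.1 p.2) {x | (p.1, ellMap γ p.1 x) ∈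
        Prod.swap ⁻¹' {p : ℝ × ℝ | (p.1, p.2, (1 : ℝ)) ∈ A}})
      (f := fun w : ℝ × ℝ × ℝ => (w.2.1, w.1)) (by fun_prop)
  · exact (measurable_step γ (measurable_slice (-1) hA)).comp
      (g := fun p : ℝ × ℝ => q (-ellInv γ p.1 p.2) {x | (p.1, ellMap γ p.1 x) ∈
        {p : ℝ × ℝ | (p.1, p.2, (-1 : ℝ)) ∈ A}})
      (f := fun w : ℝ × ℝ × ℝ => (w.1, w.2.1)) (by fun_prop)

lemma Q_int_one (γ : ℝ) {q : Kernel ℝ ℝ} [IsMarkovKernel q]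
    (hinv : KInvariantMeasure m1 (fun x => q x)) {A : Set (ℝ × ℝ × ℝ)} (hA : MeasurableSet A) :
    ∫⁻ p in Eset γ, Qfun γ q (p.1, p.2, 1) A =
      ∫⁻ p in Eset γ, A.indicator 1 (p.1, p.2, (-1 : ℝ)) := by
  simp_rw [Qfun_one γ q hA]
  exact step_invariant γ hinv (measurable_slice (-1) hA)

lemma Q_int_neg (γ : ℝ) {q : Kernel ℝ ℝ} [IsMarkovKernel q]
    (hinv : KInvariantMeasure m1 (fun x => q x)) {A : Set (ℝ × ℝ × ℝ)} (hA : MeasurableSet A) :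
    ∫⁻ p in Eset γ, Qfun γ q (p.1, p.2, -1) A =
      ∫⁻ p in Eset γ, A.indicator 1 (p.1, p.2, (1 : ℝ)) := by
  simp_rw [Qfun_neg γ q hA]
  have hB := measurable_swap (measurable_slice 1 hA)
  have h1 := step_invariant γ hinv hB
  rw [setLIntegral_Eset_swap γ (measurable_step γ hB),
    setLIntegral_Eset_swap γ (measurable_one.indicator hB)] at h1
  exact h1

lemma m2_invariant (γ : ℝ) {q : Kernel ℝ ℝ} [IsMarkovKernel q]
    (hinv : KInvariantMeasure m1 (fun x => q x)) : KInvariantMeasure (m2 γ) (Qfun γ q) := by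
  intro A hA
  rw [← lintegral_indicator_one hA, lintegral_m2 γ (measurable_Qfun γ hA),
    lintegral_m2 γ (measurable_one.indicator hA), Q_int_one γ hinv hA, Q_int_neg γ hinv hA,
    add_comm]

lemma ae_m2 {γ : ℝ} (hs : 0 < Real.sin γ) {S : Set (ℝ × ℝ × ℝ)} (hS : MeasurableSet S)
    (h : ∀ᵐ w ∂(m2 γ), w ∈ S) :
    (∀ᵐ p ∂volume.restrict (Eset γ), (p.1, p.2, (1 : ℝ)) ∈ S) ∧
      (∀ᵐ p ∂volume.restrict (Eset γ), (p.1, p.2, (-1 : ℝ)) ∈ S) := by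
  have h1 : ∫⁻ w, Sᶜ.indicator 1 w ∂(m2 γ) = 0 := by
    rw [lintegral_indicator_one hS.compl]; exact h
  rw [lintegral_m2 γ (measurable_one.indicator hS.compl)] at h1
  have h0 : (volume (Eset γ))⁻¹ ≠ 0 := ENNReal.inv_ne_zero.2 (Eset_bounds hs).2
  simp only [mul_eq_zero, h0, add_eq_zero, ENNReal.inv_eq_zero, ENNReal.ofNat_ne_top,
    false_or] at h1
  have key : ∀ s : ℝ, ∫⁻ p in Eset γ, Sᶜ.indicator 1 (p.1, p.2, s) = 0 →
      ∀ᵐ p ∂volume.restrict (Eset γ), (p.1, p.2, s) ∈ S := by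
    intro s hs'
    have hm := measurable_slice s hS
    have : ∫⁻ p in Eset γ, {p : ℝ × ℝ | (p.1, p.2, s) ∈ S}ᶜ.indicator 1 p = 0 := hs'
    rw [lintegral_indicator_one hm.compl] at this
    exact this
  exact ⟨key 1 h1.1, key (-1) h1.2⟩

lemma m2_apply (γ : ℝ) {A : Set (ℝ × ℝ × ℝ)} (hA : MeasurableSet A) :
    m2 γ A = (volume (Eset γ))⁻¹ * (2⁻¹ *
      (volume.restrict (Eset γ) {p : ℝ × ℝ | (p.1, p.2, (1 : ℝ)) ∈ A} +
        volume.restrict (Eset γ) {p : ℝ × ℝ | (p.1, p.2, (-1 : ℝ)) ∈ A})) := by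
  rw [← lintegral_indicator_one hA, lintegral_m2 γ (measurable_one.indicator hA),
    ← lintegral_indicator_one (measurable_slice 1 hA),
    ← lintegral_indicator_one (measurable_slice (-1) hA)]
  rfl

lemma m2_le_one {γ : ℝ} (A : Set (ℝ × ℝ × ℝ)) : m2 γ A ≤ 1 := by
  refine (measure_mono (subset_univ A)).trans ?_
  rw [m2_apply γ MeasurableSet.univ]
  simp only [mem_univ, ofPred_true, Measure.restrict_apply_univ]
  rw [← two_mul, ← mul_assoc 2⁻¹, ENNReal.inv_mul_cancel (by simp) (by simp), one_mul]
  exact ENNReal.inv_mul_le_one _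

lemma invariant_set_eq {γ : ℝ} {q : Kernel ℝ ℝ} [IsMarkovKernel q]
    (hinv : KInvariantMeasure m1 (fun x => q x)) {A : Set (ℝ × ℝ × ℝ)} (hA : MeasurableSet A)
    (hAi : KInvariantSet (m2 γ) (Qfun γ q) A) :
    ∀ᵐ w ∂(m2 γ), w ∈ {w | A.indicator 1 w = Qfun γ q w A} := by
  refine ae_eq_of_ae_le_of_lintegral_le ?_ ?_ (measurable_Qfun γ hA).aemeasurable ?_
  · filter_upwards [hAi] with w hw
    by_cases h : w ∈ A
    · rw [indicator_of_mem h, hw h]; rfl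
    · rw [indicator_of_notMem h]; exact zero_le
  · rw [lintegral_indicator_one hA]
    exact ((m2_le_one A).trans_lt ENNReal.one_lt_top).ne
  · rw [lintegral_indicator_one hA, m2_invariant γ hinv A hA]

/-- Structure of invariant sets along columns and rows. -/
lemma invariant_set_pairs {γ : ℝ} (hs : 0 < Real.sin γ) {q : Kernel ℝ ℝ} [IsMarkovKernel q]
    (hinv : KInvariantMeasure m1 (fun x => q x)) {A : Set (ℝ × ℝ × ℝ)} (hA : MeasurableSet A)
    (hAi : KInvariantSet (m2 γ) (Qfun γ q) A) :
    (∀ᵐ u, 0 < Rad γ u → QPair q {x | (u, ellMap γ u x, (-1 : ℝ)) ∈ A}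
      {x | (u, ellMap γ u (-x), (1 : ℝ)) ∈ A}) ∧
    (∀ᵐ v, 0 < Rad γ v → QPair q {x | (ellMap γ v x, v, (1 : ℝ)) ∈ A}
      {x | (ellMap γ v (-x), v, (-1 : ℝ)) ∈ A}) ∧
    volume.restrict (Eset γ) {p : ℝ × ℝ | (p.1, p.2, (1 : ℝ)) ∈ A} =
        volume.restrict (Eset γ) {p : ℝ × ℝ | (p.1, p.2, (-1 : ℝ)) ∈ A} := by
  have hQm := measurable_Qfun (q := q) γ hA
  have hSm : MeasurableSet {w | A.indicator 1 w = Qfun γ q w A} :=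
    measurableSet_eq_fun (measurable_one.indicator hA) hQm
  obtain ⟨h1, h2⟩ := ae_m2 hs hSm (invariant_set_eq hinv hA hAi)
  refine ⟨?_, ?_, ?_⟩
  · have h3 := (chord_ae γ (measurable_slice 1 hSm)).1 h1
    filter_upwards [h3] with u hu hR
    have := measurePreserving_neg_m1.quasiMeasurePreserving.ae (hu hR)
    filter_upwards [this] with x hx
    have hx' : A.indicator 1 (u, ellMap γ u (-x), (1 : ℝ)) =
      Qfun γ q (u, ellMap γ u (-x), 1) A := hx
    rw [Qfun_one γ q hA, ellInv_ellMap hR, neg_neg] at hx'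
    exact hx'.symm
  · have h3 := (chord_ae_row γ (measurable_slice (-1) hSm)).1 h2
    filter_upwards [h3] with v hv hR
    have := measurePreserving_neg_m1.quasiMeasurePreserving.ae (hv hR)
    filter_upwards [this] with x hx
    have hx' : A.indicator 1 (ellMap γ v (-x), v, (-1 : ℝ)) =
      Qfun γ q (ellMap γ v (-x), v, -1) A := hx
    rw [Qfun_neg γ q hA, ellInv_ellMap hR, neg_neg] at hx'
    exact hx'.symm
  · have h3 := Q_int_one γ hinv hA
    have h4 : ∫⁻ p in Eset γ, A.indicator 1 (p.1, p.2, (1 : ℝ)) =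
      ∫⁻ p in Eset γ, Qfun γ q (p.1, p.2, 1) A := lintegral_congr_ae h1
    rw [← lintegral_indicator_one (measurable_slice 1 hA),
      ← lintegral_indicator_one (measurable_slice (-1) hA)]
    exact h4.trans h3

/-- Local `L¹` continuity of compositions with a submersive family of maps. -/
lemma local_L1 {φ φ' : ℝ → ℝ → ℝ} {x₀ v₀ : ℝ} (hφm : ∀ x, Measurable (φ x))
    (hd : ∀ᶠ p : ℝ × ℝ in 𝓝 (x₀, v₀), HasDerivAt (φ p.1) (φ' p.1 p.2) p.2)
    (hc : ∀ᶠ p : ℝ × ℝ in 𝓝 (x₀, v₀), ContinuousAt (fun p : ℝ × ℝ => φ p.1 p.2) p)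
    (hc' : ContinuousAt (fun p : ℝ × ℝ => φ' p.1 p.2) (x₀, v₀)) (h0 : φ' x₀ v₀ ≠ 0) :
    ∃ δ₀ > 0, ∀ δ ≤ δ₀, ∀ H : ℝ → ℝ, Measurable H → (∀ y, |H y| ≤ 1) →
      Filter.Tendsto (fun x => ∫ v in Ioo (v₀ - δ) (v₀ + δ), |H (φ x v) - H (φ x₀ v)|)
        (𝓝 x₀) (𝓝 0) := by
  have hκ : 0 < |φ' x₀ v₀| / 2 := by have := abs_pos.2 h0; positivity
  have e1 : ∀ᶠ p : ℝ × ℝ in 𝓝 (x₀, v₀), |φ' x₀ v₀| / 2 < |φ' p.1 p.2| :=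
    hc'.abs.eventually (lt_mem_nhds (by show |φ' x₀ v₀| / 2 < |φ' x₀ v₀|; linarith))
  have e2 : ∀ᶠ p : ℝ × ℝ in 𝓝 (x₀, v₀), φ p.1 p.2 ∈ Ioo (φ x₀ v₀ - 1) (φ x₀ v₀ + 1) :=
    hc.self_of_nhds.eventually (Ioo_mem_nhds (by simp) (by simp))
  obtain ⟨δ₀, hδ₀, hall⟩ := Metric.eventually_nhds_iff.1 (hd.and (hc.and (e1.and e2)))
  refine ⟨δ₀, hδ₀, fun δ hδ H hH hb => ?_⟩
  have hJ : ∀ x, |x - x₀| < δ₀ → ∀ v ∈ Ioo (v₀ - δ) (v₀ + δ), dist ((x, v) : ℝ × ℝ) (x₀, v₀) < δ₀ := by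
    intro x hx v hv
    rw [Prod.dist_eq, max_lt_iff, Real.dist_eq, Real.dist_eq]
    refine ⟨hx, abs_lt.2 ⟨?_, ?_⟩⟩ <;> simp only <;> linarith [hv.1, hv.2]
  have : IsFiniteMeasure (ENNReal.ofReal (|φ' x₀ v₀| / 2)⁻¹ •
      (volume.restrict (Ioo (φ x₀ v₀ - 1) (φ x₀ v₀ + 1)) : Measure ℝ)) :=
    Measure.smul_finite _ ENNReal.ofReal_ne_top
  refine tendsto_comp_L1 (ρ := ENNReal.ofReal (|φ' x₀ v₀| / 2)⁻¹ •
      volume.restrict (Ioo (φ x₀ v₀ - 1) (φ x₀ v₀ + 1))) hφm ?_ ?_ hH hb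
  · have : ∀ᶠ x in 𝓝 x₀, |x - x₀| < δ₀ := by
      have := Metric.ball_mem_nhds x₀ hδ₀
      filter_upwards [this] with x hx
      rwa [Metric.mem_ball, Real.dist_eq] at hx
    filter_upwards [this] with x hx
    refine Measure.le_iff.2 fun S hS => ?_
    rw [Measure.map_apply (hφm x) hS, Measure.restrict_apply (hφm x hS), Measure.smul_apply,
      Measure.restrict_apply hS, smul_eq_mul]
    refine le_trans (measure_mono ?_) (volume_preimage_le (f' := φ' x) (p := v₀ - δ)
      (r := v₀ + δ) hκ (hφm x) (fun t ht => (hall (hJ x hx t ht)).1)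
      (fun t ht => (hall (hJ x hx t ht)).2.2.1.le) (hS.inter measurableSet_Ioo))
    exact fun t ht => ⟨⟨ht.1, (hall (hJ x hx t ht.2)).2.2.2⟩, ht.2⟩
  · refine (ae_restrict_iff' measurableSet_Ioo).2 (Filter.Eventually.of_forall fun v hv => ?_)
    have hcv : ContinuousAt (fun p : ℝ × ℝ => φ p.1 p.2) (x₀, v) :=
      (hall (hJ x₀ (by simpa using hδ₀) v hv)).2.1
    exact hcv.tendsto.comp (Continuous.tendsto (by fun_prop : Continuous fun x : ℝ => (x, v)) x₀)

lemma continuous_Rad (γ : ℝ) : Continuous (Rad γ) := by unfold Rad; fun_prop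

lemma hasDerivAt_Rad {γ v : ℝ} (h : 0 < Rad γ v) :
    HasDerivAt (Rad γ) (-(v * Real.sin γ ^ 2) / Rad γ v) v := by
  have h1 : HasDerivAt (fun u : ℝ => 1 - u ^ 2 * Real.sin γ ^ 2) (-(2 * v * Real.sin γ ^ 2)) v := by
    have := ((hasDerivAt_pow 2 v).mul_const (Real.sin γ ^ 2)).const_sub 1
    exact this.congr_deriv (by norm_num)
  have h2 := h1.sqrt (by have := Rad_pos_iff.1 h; linarith)
  refine h2.congr_deriv ?_
  have h3 := h.ne'
  unfold Rad at h3 ⊢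
  field_simp

/-- The second family of maps. -/
def wMap (γ x v : ℝ) : ℝ := (Real.sin γ ^ 2 * v / Rad γ v + x * Real.cos γ) / Real.sqrt (1 - x ^ 2)

/-- Bounded coordinate. -/
def sq1 (w : ℝ) : ℝ := w / Real.sqrt (1 + w ^ 2)

lemma measurable_sq1 : Measurable sq1 := by unfold sq1; fun_prop

lemma ellInv_eq_sq1 {γ x v : ℝ} (hx : x ∈ Ioo (-1 : ℝ) 1) (hv : 0 < Rad γ v) :
    ellInv γ (ellMap γ v x) v = sq1 (wMap γ x v) := by
  have hs : 0 < 1 - x ^ 2 := by nlinarith [hx.1, hx.2]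
  have hR := Rad_sq hv
  have hS : Real.sqrt (1 - x ^ 2) ^ 2 = 1 - x ^ 2 := Real.sq_sqrt hs.le
  have hS0 : 0 < Real.sqrt (1 - x ^ 2) := Real.sqrt_pos.2 hs
  have hsc := Real.sin_sq_add_cos_sq γ
  set u := ellMap γ v x with hu
  have hu' : u = -v * Real.cos γ + x * Rad γ v := rfl
  have hmem : (v, u) ∈ Eset γ := (mem_Eset_ellMap hv).2 hx
  have hRu : 0 < Rad γ u := Rad_pos_of_mem (Eset_swap.1 hmem)
  have hRu2 := Rad_sq hRu
  have hnum : v + u * Real.cos γ = Real.sin γ ^ 2 * v + x * Real.cos γ * Rad γ v := by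
    rw [hu', show Real.sin γ ^ 2 = 1 - Real.cos γ ^ 2 by linarith]; ring
  have hw : wMap γ x v = (v + u * Real.cos γ) / (Rad γ v * Real.sqrt (1 - x ^ 2)) := by
    rw [hnum, wMap]; field_simp
  have hid : Rad γ v ^ 2 * (1 - x ^ 2) + (v + u * Real.cos γ) ^ 2 = Rad γ u ^ 2 := by
    have hq := quad_eq γ u v
    have hq2 := quad_eq γ v u
    have h3 : u + v * Real.cos γ = x * Rad γ v := by rw [hu']; ring
    rw [h3] at hq2
    have h4 : u ^ 2 + 2 * Real.cos γ * u * v + v ^ 2 = v ^ 2 + 2 * Real.cos γ * v * u + u ^ 2 := by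
      ring
    rw [hRu2]
    nlinarith
  have hden : Real.sqrt (1 + wMap γ x v ^ 2) = Rad γ u / (Rad γ v * Real.sqrt (1 - x ^ 2)) := by
    rw [Real.sqrt_eq_iff_mul_self_eq_of_pos (by positivity), hw]
    rw [div_pow, mul_pow, hS, div_mul_div_comm, ← sq, ← sq, mul_pow, hS, ← hid]
    field_simp
  rw [sq1, hden, hw]
  change (v + u * Real.cos γ) / Rad γ u = _
  field_simp

lemma hasDerivAt_wMap {γ x v : ℝ} (hv : 0 < Rad γ v) :
    HasDerivAt (wMap γ x) (Real.sin γ ^ 2 / Rad γ v ^ 3 / Real.sqrt (1 - x ^ 2)) v := by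
  have h1 := (((hasDerivAt_id v).const_mul (Real.sin γ ^ 2)).div (hasDerivAt_Rad hv) hv.ne')
  have h2 := (h1.add_const (x * Real.cos γ)).div_const (Real.sqrt (1 - x ^ 2))
  refine h2.congr_deriv ?_
  congr 1
  have hR := Rad_sq hv
  simp only [id_eq]
  field_simp
  rw [hR]; ring

lemma hasDerivAt_ellMap {γ x v : ℝ} (hv : 0 < Rad γ v) :
    HasDerivAt (fun v => ellMap γ v x) (-(Real.cos γ + x * v * Real.sin γ ^ 2 / Rad γ v)) v := by
  have h1 := ((hasDerivAt_id v).neg.mul_const (Real.cos γ)).add ((hasDerivAt_Rad hv).const_mul x)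
  exact h1.congr_deriv (by ring)

lemma crit_null {γ : ℝ} (hk : Real.cos γ ≠ 0) (hs : 0 < Real.sin γ) (x : ℝ) :
    volume {v : ℝ | 0 < Rad γ v ∧ Real.cos γ + x * v * Real.sin γ ^ 2 / Rad γ v = 0} = 0 := by
  have hk2 : 0 < Real.cos γ ^ 2 := by positivity
  have hD : 0 < Real.cos γ ^ 2 * Real.sin γ ^ 2 + x ^ 2 * Real.sin γ ^ 4 := by positivity
  set D := Real.cos γ ^ 2 * Real.sin γ ^ 2 + x ^ 2 * Real.sin γ ^ 4 with hDdef
  set t := Real.sqrt (Real.cos γ ^ 2 / D)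
  refine measure_mono_null (t := {t, -t}) ?_ (Set.Finite.measure_zero (by simp) _)
  rintro v ⟨hv, h⟩
  have hR := Rad_sq hv
  have h1 : Real.cos γ * Rad γ v = -(x * v * Real.sin γ ^ 2) := by
    field_simp at h; linarith
  have h2 : Real.cos γ ^ 2 * Rad γ v ^ 2 = x ^ 2 * v ^ 2 * Real.sin γ ^ 4 := by
    rw [← mul_pow, h1]; ring
  rw [hR] at h2
  have h3 : v ^ 2 = Real.cos γ ^ 2 / D := by
    rw [eq_div_iff hD.ne', hDdef]; linarith
  have h4 : t ^ 2 = v ^ 2 := by rw [h3]; exact Real.sq_sqrt (by positivity)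
  exact sq_eq_sq_iff_eq_or_eq_neg.1 h4.symm

lemma measurable_wMap (γ x : ℝ) : Measurable (wMap γ x) := by
  have := measurable_Rad γ
  unfold wMap; fun_prop

lemma measurable_wMap_uncurry (γ : ℝ) : Measurable fun p : ℝ × ℝ => wMap γ p.1 p.2 := by
  have := measurable_Rad γ
  unfold wMap; fun_prop

lemma measurable_ellMap_left (γ x : ℝ) : Measurable fun v => ellMap γ v x := by
  unfold ellMap; fun_prop

lemma local_L1_ell {γ : ℝ} {x₀ v₀ : ℝ} (hv : 0 < Rad γ v₀)
    (hcrit : Real.cos γ + x₀ * v₀ * Real.sin γ ^ 2 / Rad γ v₀ ≠ 0) :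
    ∃ δ₀ > 0, ∀ δ ≤ δ₀, ∀ H : ℝ → ℝ, Measurable H → (∀ y, |H y| ≤ 1) →
      Filter.Tendsto (fun x => ∫ v in Ioo (v₀ - δ) (v₀ + δ), |H (ellMap γ v x) - H (ellMap γ v x₀)|)
        (𝓝 x₀) (𝓝 0) := by
  have hR := continuous_Rad γ
  have hRp : ∀ᶠ p : ℝ × ℝ in 𝓝 (x₀, v₀), 0 < Rad γ p.2 :=
    (hR.comp continuous_snd).continuousAt.eventually (lt_mem_nhds hv)
  refine local_L1 (φ := fun x v => ellMap γ v x)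
    (φ' := fun x v => -(Real.cos γ + x * v * Real.sin γ ^ 2 / Rad γ v))
    (fun x => measurable_ellMap_left γ x) ?_ ?_ ?_ (neg_ne_zero.2 hcrit)
  · filter_upwards [hRp] with p hp using hasDerivAt_ellMap hp
  · refine Filter.Eventually.of_forall fun p => Continuous.continuousAt ?_
    unfold ellMap; fun_prop
  · refine ContinuousAt.neg (continuousAt_const.add (ContinuousAt.div ?_ ?_ hv.ne'))
    · fun_prop
    · exact (hR.comp continuous_snd).continuousAt

lemma local_L1_w {γ : ℝ} (hs : 0 < Real.sin γ) {x₀ v₀ : ℝ} (hv : 0 < Rad γ v₀)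
    (hx₀ : x₀ ∈ Ioo (-1 : ℝ) 1) :
    ∃ δ₀ > 0, ∀ δ ≤ δ₀, ∀ H : ℝ → ℝ, Measurable H → (∀ y, |H y| ≤ 1) →
      Filter.Tendsto (fun x => ∫ v in Ioo (v₀ - δ) (v₀ + δ), |H (wMap γ x v) - H (wMap γ x₀ v)|)
        (𝓝 x₀) (𝓝 0) := by
  have hR := continuous_Rad γ
  have hRp : ∀ᶠ p : ℝ × ℝ in 𝓝 (x₀, v₀), 0 < Rad γ p.2 :=
    (hR.comp continuous_snd).continuousAt.eventually (lt_mem_nhds hv)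
  have hSc : Continuous fun p : ℝ × ℝ => Real.sqrt (1 - p.1 ^ 2) := by fun_prop
  have hSpos : 0 < Real.sqrt (1 - x₀ ^ 2) := Real.sqrt_pos.2 (by nlinarith [hx₀.1, hx₀.2])
  have hSp : ∀ᶠ p : ℝ × ℝ in 𝓝 (x₀, v₀), 0 < Real.sqrt (1 - p.1 ^ 2) :=
    hSc.continuousAt.eventually (lt_mem_nhds hSpos)
  refine local_L1 (φ := fun x v => wMap γ x v)
    (φ' := fun x v => Real.sin γ ^ 2 / Rad γ v ^ 3 / Real.sqrt (1 - x ^ 2))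
    (fun x => measurable_wMap γ x) ?_ ?_ ?_ (by positivity)
  · filter_upwards [hRp] with p hp using hasDerivAt_wMap hp
  · filter_upwards [hRp, hSp] with p hp hp'
    have hRc : ContinuousAt (fun p : ℝ × ℝ => Rad γ p.2) p :=
      (hR.comp continuous_snd).continuousAt
    refine ContinuousAt.div (ContinuousAt.add (ContinuousAt.div ?_ hRc hp.ne') ?_)
      hSc.continuousAt hp'.ne'
    · fun_prop
    · fun_prop
  · have hRc : ContinuousAt (fun p : ℝ × ℝ => Rad γ p.2 ^ 3) (x₀, v₀) :=
      ((hR.comp continuous_snd).pow 3).continuousAt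
    exact ContinuousAt.div (ContinuousAt.div continuousAt_const hRc (by simp only; positivity))
      hSc.continuousAt hSpos.ne'

lemma main_local {γ : ℝ} (hs : 0 < Real.sin γ) (hk : Real.cos γ ≠ 0) {a b a' b' c c' : ℝ → ℝ}
    (ha : Measurable a) (hb : Measurable b) (ha' : Measurable a') (hb' : Measurable b')
    (hc : Measurable c) (hc' : Measurable c')
    (ba : ∀ x, |a x| ≤ 1) (bb : ∀ x, |b x| ≤ 1) (ba' : ∀ x, |a' x| ≤ 1) (bb' : ∀ x, |b' x| ≤ 1)
    (bc' : ∀ x, |c' x| ≤ 1) (hc1 : ∀ x, c x = 1 ∨ c x = -1)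
    (h : ∀ᵐ p ∂volume.restrict (Eset γ), p ∈ {p : ℝ × ℝ | a p.2 + b p.2 * c (ellInv γ p.2 p.1) =
      a' p.1 + b' p.1 * c' (ellInv γ p.1 p.2)})
    (hb0 : volume {v | 0 < Rad γ v ∧ b v ≠ 0} ≠ 0) {x₀ : ℝ} (hx₀ : x₀ ∈ Ioo (-1 : ℝ) 1) :
    ∃ U ∈ 𝓝 x₀, volume (U ∩ {x | c x = 1}) = 0 ∨ volume (U \ {x | c x = 1}) = 0 := by
  have mI := measurable_ellInv γ
  have mI1 : Measurable fun p : ℝ × ℝ => ellInv γ p.2 p.1 := mI.comp measurable_swap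
  have mE : Measurable fun p : ℝ × ℝ => ellMap γ p.2 p.1 := (measurable_ellMap γ).comp measurable_swap
  have mW := measurable_wMap_uncurry γ
  have mS := measurable_sq1
  have hSm : MeasurableSet {p : ℝ × ℝ | a p.2 + b p.2 * c (ellInv γ p.2 p.1) =
      a' p.1 + b' p.1 * c' (ellInv γ p.1 p.2)} :=
    measurableSet_eq_fun (by fun_prop) (by fun_prop)
  have hpt : ∀ᵐ v, 0 < Rad γ v → ∀ᵐ x ∂volume.restrict (Ioo (-1 : ℝ) 1),
      a v + b v * c x = a' (ellMap γ v x) + b' (ellMap γ v x) * c' (sq1 (wMap γ x v)) := by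
    filter_upwards [(chord_ae_row γ hSm).1 h] with v hv hR
    have h1 := ae_m1_iff.1 (hv hR)
    filter_upwards [h1, ae_restrict_mem measurableSet_Ioo] with x hx hxI
    rwa [ellInv_ellMap hR, ellInv_eq_sq1 hxI hR] at hx
  -- choose the base point
  have hT : volume ({v | 0 < Rad γ v ∧ b v ≠ 0} \ {v : ℝ | 0 < Rad γ v ∧
      Real.cos γ + x₀ * v * Real.sin γ ^ 2 / Rad γ v = 0}) ≠ 0 := by
    rwa [measure_sdiff_null (crit_null hk hs x₀)]
  obtain ⟨v₀, ⟨⟨hv₀, -⟩, hv₀c⟩, hpos⟩ := exists_mem_forall_mem_nhdsWithin_pos_measure hT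
  have hcrit : Real.cos γ + x₀ * v₀ * Real.sin γ ^ 2 / Rad γ v₀ ≠ 0 := fun h => hv₀c ⟨hv₀, h⟩
  obtain ⟨δ₁, hδ₁, H1⟩ := local_L1_ell hv₀ hcrit
  obtain ⟨δ₂, hδ₂, H2⟩ := local_L1_w hs hv₀ hx₀
  obtain ⟨δ₃, hδ₃, H3⟩ := Metric.eventually_nhds_iff.1
    ((continuous_Rad γ).continuousAt.eventually (lt_mem_nhds hv₀))
  obtain ⟨δ, hδ, h1, h2, h3⟩ : ∃ δ > 0, δ ≤ δ₁ ∧ δ ≤ δ₂ ∧ δ ≤ δ₃ :=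
    ⟨min δ₁ (min δ₂ δ₃), by positivity, by simp, by simp, by simp⟩
  specialize H1 δ h1
  specialize H2 δ h2
  set J := Ioo (v₀ - δ) (v₀ + δ) with hJ
  have hJR : ∀ v ∈ J, 0 < Rad γ v := fun v hv => H3 (by
    rw [Real.dist_eq]; exact abs_lt.2 ⟨by linarith [hv.1], by linarith [hv.2]⟩)
  have hJm : MeasurableSet J := measurableSet_Ioo
  have : IsFiniteMeasure (volume.restrict J) := by rw [hJ]; infer_instance
  have hint : ∀ (f : ℝ → ℝ), Measurable f → (∃ C, ∀ v, |f v| ≤ C) → Integrable f (volume.restrict J) :=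
    fun f hf ⟨C, hC⟩ => Integrable.of_bound hf.aestronglyMeasurable C
      (Filter.Eventually.of_forall hC)
  have hsw : ∀ᵐ x ∂volume.restrict (Ioo (-1 : ℝ) 1), ∀ᵐ v ∂volume.restrict J,
      a v + b v * c x = a' (ellMap γ v x) + b' (ellMap γ v x) * c' (sq1 (wMap γ x v)) := by
    have hmm : MeasurableSet {p : ℝ × ℝ | a p.2 + b p.2 * c p.1 =
        a' (ellMap γ p.2 p.1) + b' (ellMap γ p.2 p.1) * c' (sq1 (wMap γ p.1 p.2))} :=
      measurableSet_eq_fun (by fun_prop) (by fun_prop)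
    refine (Measure.ae_ae_comm (p := fun x v => a v + b v * c x =
      a' (ellMap γ v x) + b' (ellMap γ v x) * c' (sq1 (wMap γ x v))) hmm).2 ?_
    filter_upwards [ae_restrict_of_ae hpt, ae_restrict_mem hJm] with v hv hvJ
    exact hv (hJR v hvJ)
  set G : ℝ → ℝ → ℝ := fun x v => a' (ellMap γ v x) + b' (ellMap γ v x) * c' (sq1 (wMap γ x v)) with hG
  have mG : ∀ x, Measurable (G x) := fun x => by
    have := measurable_ellMap_left γ x
    have := measurable_wMap γ x
    simp only [hG]; fun_prop
  have bG : ∀ x v, |G x v| ≤ 2 := fun x v => by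
    refine (abs_add_le _ _).trans ?_
    rw [abs_mul]
    nlinarith [ba' (ellMap γ v x), bb' (ellMap γ v x), bc' (sq1 (wMap γ x v)),
      abs_nonneg (b' (ellMap γ v x)), abs_nonneg (c' (sq1 (wMap γ x v)))]
  set K : ℝ → ℝ := fun x => ∫ v in J, b v * G x v with hK
  set α := ∫ v in J, b v * a v with hα
  set β := ∫ v in J, b v ^ 2 with hβ
  have bmul : ∀ {s t C : ℝ}, |s| ≤ 1 → |t| ≤ C → |s * t| ≤ C := fun {s t C} h1 h2 => by
    rw [abs_mul]
    nlinarith [abs_nonneg s, abs_nonneg t]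
  have iba : Integrable (fun v => b v * a v) (volume.restrict J) :=
    hint _ (hb.mul ha) ⟨1, fun v => bmul (bb v) (ba v)⟩
  have ibb : Integrable (fun v => b v ^ 2) (volume.restrict J) :=
    hint _ (hb.pow_const 2) ⟨1, fun v => by rw [sq]; exact bmul (bb v) (bb v)⟩
  have ibG : ∀ x, Integrable (fun v => b v * G x v) (volume.restrict J) := fun x =>
    hint _ (hb.mul (mG x)) ⟨2, fun v => bmul (bb v) (bG x v)⟩
  have hKeq : ∀ᵐ x ∂volume.restrict (Ioo (-1 : ℝ) 1), α + c x * β = K x := by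
    filter_upwards [hsw] with x hx
    rw [hα, hβ, hK, ← integral_const_mul, ← integral_add iba (ibb.const_mul _)]
    refine integral_congr_ae ?_
    filter_upwards [hx] with v hv
    simp only [hG]
    rw [← hv]; ring
  have hβpos : 0 < β := by
    rw [hβ, setIntegral_pos_iff_support_of_nonneg_ae (Filter.Eventually.of_forall fun v => sq_nonneg _) ibb]
    refine lt_of_lt_of_le (hpos _ (Filter.inter_mem (mem_nhdsWithin_of_mem_nhds
      (Ioo_mem_nhds (show v₀ - δ < v₀ by linarith) (show v₀ < v₀ + δ by linarith)))
      self_mem_nhdsWithin)) (measure_mono ?_)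
    rintro v ⟨hvJ, ⟨⟨-, hvb⟩, -⟩⟩
    exact ⟨by simpa using hvb, hvJ⟩
  have hKlim : Filter.Tendsto (fun x => |K x - K x₀|) (𝓝 x₀) (𝓝 0) := by
    have T := ((H1 a' ha' ba').add (H1 b' hb' bb')).add
      (H2 (fun w => c' (sq1 w)) (hc'.comp mS) (fun w => bc' _))
    simp only [add_zero] at T
    refine squeeze_zero (fun _ => abs_nonneg _) (fun x => ?_) T
    have m1 := measurable_ellMap_left γ x
    have m2 := measurable_ellMap_left γ x₀
    have m3 := measurable_wMap γ x
    have m4 := measurable_wMap γ x₀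
    have bsub : ∀ {s t : ℝ}, |s| ≤ 1 → |t| ≤ 1 → |(|s - t|)| ≤ 2 := fun {s t} h1 h2 => by
      rw [abs_abs]; exact (abs_sub _ _).trans (by linarith)
    have i1 : Integrable (fun v => |a' (ellMap γ v x) - a' (ellMap γ v x₀)|) (volume.restrict J) :=
      hint _ (Measurable.abs (by fun_prop)) ⟨2, fun v => bsub (ba' _) (ba' _)⟩
    have i2 : Integrable (fun v => |b' (ellMap γ v x) - b' (ellMap γ v x₀)|) (volume.restrict J) :=
      hint _ (Measurable.abs (by fun_prop)) ⟨2, fun v => bsub (bb' _) (bb' _)⟩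
    have i3 : Integrable (fun v => |c' (sq1 (wMap γ x v)) - c' (sq1 (wMap γ x₀ v))|)
        (volume.restrict J) :=
      hint _ (Measurable.abs (by fun_prop)) ⟨2, fun v => bsub (bc' _) (bc' _)⟩
    have i12 : Integrable (fun v => |a' (ellMap γ v x) - a' (ellMap γ v x₀)| +
      |b' (ellMap γ v x) - b' (ellMap γ v x₀)|) (volume.restrict J) := i1.add i2
    rw [hK, ← integral_sub (ibG x) (ibG x₀), ← integral_add i1 i2, ← integral_add i12 i3]
    refine (abs_integral_le_integral_abs).trans (integral_mono ((ibG x).sub (ibG x₀)).abs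
      (i12.add i3) fun v => ?_)
    simp only [Pi.add_apply]
    rw [← mul_sub]
    refine bmul (bb v) ?_
    simp only [hG]
    set p := b' (ellMap γ v x) with hp
    set r := c' (sq1 (wMap γ x v)) with hr
    set p0 := b' (ellMap γ v x₀) with hp0
    set r0 := c' (sq1 (wMap γ x₀ v)) with hr0
    have e : a' (ellMap γ v x) + p * r - (a' (ellMap γ v x₀) + p0 * r0) =
      (a' (ellMap γ v x) - a' (ellMap γ v x₀)) + r * (p - p0) + p0 * (r - r0) := by ring
    rw [e]
    refine (abs_add_le _ _).trans (add_le_add ((abs_add_le _ _).trans (add_le_add le_rfl ?_)) ?_)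
    · exact bmul (bc' _) le_rfl
    · exact bmul (bb' _) le_rfl
  have hU : {x | |K x - K x₀| < β} ∩ Ioo (-1 : ℝ) 1 ∈ 𝓝 x₀ :=
    Filter.inter_mem (hKlim.eventually (gt_mem_nhds hβpos)) (Ioo_mem_nhds hx₀.1 hx₀.2)
  refine ⟨_, hU, ?_⟩
  have hKeq' := (ae_restrict_iff' measurableSet_Ioo).1 hKeq
  rcases le_or_gt 0 (K x₀ - α) with hL | hL
  · right
    have : ∀ᵐ x, x ∉ ({x | |K x - K x₀| < β} ∩ Ioo (-1 : ℝ) 1) \ {x | c x = 1} := by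
      filter_upwards [hKeq'] with x hx hmem
      obtain ⟨⟨h1, h2⟩, h3⟩ := hmem
      have h4 := hx h2
      have h5 : c x = -1 := (hc1 x).resolve_left h3
      rw [mem_ofPred_eq, ← h4, h5, abs_lt] at h1
      linarith [h1.1]
    rw [ae_iff] at this
    simpa only [not_not, ofPred_mem_eq] using this
  · left
    have : ∀ᵐ x, x ∉ ({x | |K x - K x₀| < β} ∩ Ioo (-1 : ℝ) 1) ∩ {x | c x = 1} := by
      filter_upwards [hKeq'] with x hx hmem
      obtain ⟨⟨h1, h2⟩, h3⟩ := hmem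
      have h4 := hx h2
      have h5 : c x = 1 := h3
      rw [mem_ofPred_eq, ← h4, h5, abs_lt] at h1
      linarith [h1.2]
    rw [ae_iff] at this
    simpa only [not_not, ofPred_mem_eq] using this

lemma main_global {γ : ℝ} (hs : 0 < Real.sin γ) (hk : Real.cos γ ≠ 0) {a b a' b' c c' : ℝ → ℝ}
    (ha : Measurable a) (hb : Measurable b) (ha' : Measurable a') (hb' : Measurable b')
    (hc : Measurable c) (hc' : Measurable c')
    (ba : ∀ x, |a x| ≤ 1) (bb : ∀ x, |b x| ≤ 1) (ba' : ∀ x, |a' x| ≤ 1) (bb' : ∀ x, |b' x| ≤ 1)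
    (bc' : ∀ x, |c' x| ≤ 1) (hc1 : ∀ x, c x = 1 ∨ c x = -1)
    (hhalf : m1.real {x | c x = 1} = 1 / 2)
    (h : ∀ᵐ p ∂volume.restrict (Eset γ), p ∈ {p : ℝ × ℝ | a p.2 + b p.2 * c (ellInv γ p.2 p.1) =
      a' p.1 + b' p.1 * c' (ellInv γ p.1 p.2)}) :
    ∀ᵐ v, 0 < Rad γ v → b v = 0 := by
  by_contra hcon
  have hb0 : volume {v | 0 < Rad γ v ∧ b v ≠ 0} ≠ 0 := by
    intro h0
    refine hcon (ae_iff.2 ?_)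
    convert h0 using 2
    ext v
    simp
  have hcm : MeasurableSet {x | c x = 1} := measurableSet_eq_fun hc measurable_const
  rcases null_or_conull_of_locally (μ := (volume : Measure ℝ)) (Ω := Ioo (-1 : ℝ) 1)
    (S := {x | c x = 1}) isOpen_Ioo isPreconnected_Ioo
    (fun x hx => main_local hs hk ha hb ha' hb' hc hc' ba bb ba' bb' bc' hc1 h hb0 hx) with h0 | h0
  · have : m1 {x | c x = 1} = 0 := by
      rw [m1, Measure.smul_apply, Measure.restrict_apply hcm, inter_comm, h0, smul_zero]
    rw [measureReal_def, this] at hhalf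
    norm_num at hhalf
  · have : m1 {x | c x = 1}ᶜ = 0 := by
      rw [m1, Measure.smul_apply, Measure.restrict_apply hcm.compl, inter_comm, ← sdiff_eq, h0,
        smul_zero]
    have h1 := probReal_compl_eq_one_sub (μ := m1) hcm
    rw [measureReal_def, this, hhalf] at h1
    norm_num at h1

lemma convex_Eset (γ : ℝ) : Convex ℝ (Eset γ) := by
  intro p hp q hq s t hs ht hst
  have hp' : p.1 ^ 2 + 2 * Real.cos γ * p.1 * p.2 + p.2 ^ 2 < 1 := hp
  have hq' : q.1 ^ 2 + 2 * Real.cos γ * q.1 * q.2 + q.2 ^ 2 < 1 := hq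
  change (s * p.1 + t * q.1) ^ 2 + 2 * Real.cos γ * (s * p.1 + t * q.1) * (s * p.2 + t * q.2) +
    (s * p.2 + t * q.2) ^ 2 < 1
  have hd : 0 ≤ (p.1 - q.1) ^ 2 + 2 * Real.cos γ * (p.1 - q.1) * (p.2 - q.2) + (p.2 - q.2) ^ 2 := by
    rw [quad_eq]; positivity
  have hst0 : 0 ≤ s * t := mul_nonneg hs ht
  have e : (s * p.1 + t * q.1) ^ 2 + 2 * Real.cos γ * (s * p.1 + t * q.1) * (s * p.2 + t * q.2) +
    (s * p.2 + t * q.2) ^ 2 = s * (p.1 ^ 2 + 2 * Real.cos γ * p.1 * p.2 + p.2 ^ 2) +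
      t * (q.1 ^ 2 + 2 * Real.cos γ * q.1 * q.2 + q.2 ^ 2) - s * t *
      ((p.1 - q.1) ^ 2 + 2 * Real.cos γ * (p.1 - q.1) * (p.2 - q.2) + (p.2 - q.2) ^ 2) := by
    obtain rfl : t = 1 - s := by linarith
    ring
  rw [e]
  have h1 := mul_nonneg hst0 hd
  rcases hs.eq_or_lt with rfl | hs'
  · have : t = 1 := by linarith
    subst this
    linarith
  · have h2 := mul_lt_mul_of_pos_left hp' hs'
    have h3 := mul_le_mul_of_nonneg_left hq'.le ht
    linarith

/-- A set whose indicator depends only on each coordinate separately is trivial in `E`. -/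
lemma null_or_conull_Eset {γ : ℝ} {S : Set (ℝ × ℝ)} {f g : ℝ → ℝ}
    (hf : ∀ᵐ p ∂volume.restrict (Eset γ), S.indicator 1 p = f p.2)
    (hg : ∀ᵐ p ∂volume.restrict (Eset γ), S.indicator 1 p = g p.1) :
    volume (Eset γ ∩ S) = 0 ∨ volume (Eset γ \ S) = 0 := by
  refine null_or_conull_of_locally (isOpen_Eset γ) (convex_Eset γ).isPreconnected fun p hp => ?_
  obtain ⟨δ, hδ, hball⟩ := Metric.isOpen_iff.1 (isOpen_Eset γ) p hp
  set I₁ := Metric.ball p.1 δ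
  set I₂ := Metric.ball p.2 δ
  have hbox : I₁ ×ˢ I₂ ⊆ Eset γ := by
    rw [ball_prod_same]; exact hball
  have hprod : (volume.restrict (I₁ ×ˢ I₂) : Measure (ℝ × ℝ)) =
      (volume.restrict I₁).prod (volume.restrict I₂) := by
    rw [Measure.prod_restrict]; rfl
  have hf' : ∀ᵐ p ∂(volume.restrict I₁).prod (volume.restrict I₂), S.indicator 1 p = f p.2 := by
    rw [← hprod]; exact ae_restrict_of_ae_restrict_of_subset hbox hf
  have hg' : ∀ᵐ p ∂(volume.restrict I₁).prod (volume.restrict I₂), S.indicator 1 p = g p.1 := by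
    rw [← hprod]; exact ae_restrict_of_ae_restrict_of_subset hbox hg
  have hfg : ∀ᵐ p ∂(volume.restrict I₁).prod (volume.restrict I₂), f p.2 = g p.1 := by
    filter_upwards [hf', hg'] with p h1 h2
    rw [← h1, h2]
  have hne : (volume.restrict I₁ : Measure ℝ) ≠ 0 := by
    rw [Ne, Measure.restrict_eq_zero]
    exact (Metric.measure_ball_pos volume _ hδ).ne'
  have : (ae (volume.restrict I₁ : Measure ℝ)).NeBot := ae_neBot.2 hne
  obtain ⟨u₁, hu₁⟩ := (Measure.ae_ae_of_ae_prod hfg).exists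
  simp only at hu₁
  have hconst : ∀ᵐ p ∂(volume.restrict I₁).prod (volume.restrict I₂), f p.2 = g u₁ :=
    Measure.quasiMeasurePreserving_snd.ae hu₁
  have hS : ∀ᵐ p, p ∈ I₁ ×ˢ I₂ → S.indicator (1 : ℝ × ℝ → ℝ) p = g u₁ := by
    refine (ae_restrict_iff' (Metric.isOpen_ball.measurableSet.prod
      Metric.isOpen_ball.measurableSet)).1 ?_
    rw [hprod]
    filter_upwards [hf', hconst] with p h1 h2
    rw [h1, h2]
  refine ⟨I₁ ×ˢ I₂, prod_mem_nhds (Metric.ball_mem_nhds _ hδ) (Metric.ball_mem_nhds _ hδ), ?_⟩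
  by_cases ht : g u₁ = 1
  · right
    have : ∀ᵐ p, p ∉ (I₁ ×ˢ I₂) \ S := by
      filter_upwards [hS] with p hp ⟨h1, h2⟩
      have := hp h1
      rw [indicator_of_notMem h2, ht] at this
      norm_num at this
    rw [ae_iff] at this
    simpa only [not_not, ofPred_mem_eq] using this
  · left
    have : ∀ᵐ p, p ∉ (I₁ ×ˢ I₂) ∩ S := by
      filter_upwards [hS] with p hp ⟨h1, h2⟩
      have := hp h1
      rw [indicator_of_mem h2] at this
      exact ht this.symm
    rw [ae_iff] at this
    simpa only [not_not, ofPred_mem_eq] using this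

lemma section_measurable {T : Set (ℝ × ℝ)} (hT : MeasurableSet T) {c : ℝ → ℝ} (hc : Measurable c)
    (bc : ∀ x, |c x| ≤ 1) :
    Measurable (fun v => m1.real {x | (v, x) ∈ T}) ∧
    Measurable (fun v => ∫ y in {x | (v, x) ∈ T}, c y ∂m1) ∧
    (∀ v, |m1.real {x | (v, x) ∈ T}| ≤ 1) ∧
    (∀ v, |∫ y in {x | (v, x) ∈ T}, c y ∂m1| ≤ 1) := by
  have hTv : ∀ v, MeasurableSet {x | (v, x) ∈ T} := fun v => measurable_prodMk_left hT
  refine ⟨(measurable_measure_prodMk_left hT).ennreal_toReal, ?_, ?_, ?_⟩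
  · have h1 : Measurable (T.indicator fun p : ℝ × ℝ => c p.2) :=
      (hc.comp measurable_snd).indicator hT
    have h2 := (h1.stronglyMeasurable.integral_prod_right' (ν := m1)).measurable
    convert h2 using 2 with v
    rw [← integral_indicator (hTv v)]
    rfl
  · intro v
    rw [abs_of_nonneg measureReal_nonneg]
    exact measureReal_le_one
  · intro v
    have := norm_setIntegral_le_of_norm_le_const (μ := m1) (s := {x | (v, x) ∈ T}) (f := c) (C := 1)
      (measure_lt_top _ _) (fun x _ => bc x)
    rw [one_mul] at this
    exact this.trans measureReal_le_one

lemma final_dichotomy {γ : ℝ} (hs : 0 < Real.sin γ) (hk : Real.cos γ ≠ 0) {q : Kernel ℝ ℝ}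
    [IsMarkovKernel q] (hrev : Reversible1 q) (herg : KErgodicMeasure m1 (fun x => q x))
    {A : Set (ℝ × ℝ × ℝ)} (hA : MeasurableSet A) (hAi : KInvariantSet (m2 γ) (Qfun γ q) A) :
    volume (Eset γ ∩ {p : ℝ × ℝ | (p.1, p.2, (1 : ℝ)) ∈ A}) = 0 ∨
      volume (Eset γ \ {p : ℝ × ℝ | (p.1, p.2, (1 : ℝ)) ∈ A}) = 0 := by
  obtain ⟨hcol, hrow, -⟩ := invariant_set_pairs hs herg.1 hA hAi
  obtain ⟨c, hc, bc, hcc, hstr⟩ := row_structure hrev herg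
  set Ap : Set (ℝ × ℝ) := {p : ℝ × ℝ | (p.1, p.2, (1 : ℝ)) ∈ A} with hAp
  have hApm : MeasurableSet Ap := measurable_slice 1 hA
  have mM := measurable_ellMap γ
  have mMn : Measurable fun p : ℝ × ℝ => ellMap γ p.1 (-p.2) :=
    mM.comp (measurable_fst.prodMk measurable_snd.neg)
  have mI := measurable_ellInv γ
  have mI1 : Measurable fun p : ℝ × ℝ => ellInv γ p.2 p.1 := mI.comp measurable_swap
  have hT : MeasurableSet {p : ℝ × ℝ | (ellMap γ p.1 p.2, p.1, (1 : ℝ)) ∈ A} :=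
    (mM.prodMk (measurable_fst.prodMk measurable_const)) hA
  have hT' : MeasurableSet {p : ℝ × ℝ | (p.1, ellMap γ p.1 (-p.2), (1 : ℝ)) ∈ A} :=
    (measurable_fst.prodMk (mMn.prodMk measurable_const)) hA
  have hTm : MeasurableSet {p : ℝ × ℝ | (p.1, ellMap γ p.1 p.2, (-1 : ℝ)) ∈ A} :=
    (measurable_fst.prodMk (mM.prodMk measurable_const)) hA
  have hTm' : MeasurableSet {p : ℝ × ℝ | (ellMap γ p.1 (-p.2), p.1, (-1 : ℝ)) ∈ A} :=
    (mMn.prodMk (measurable_fst.prodMk measurable_const)) hA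
  obtain ⟨ma, mb, ba, bb⟩ := section_measurable hT hc bc
  obtain ⟨ma', mb', ba', bb'⟩ := section_measurable hT' hc bc
  simp only [mem_ofPred_eq] at ma mb ba bb ma' mb' ba' bb'
  set a : ℝ → ℝ := fun v => m1.real {x | (ellMap γ v x, v, (1 : ℝ)) ∈ A} with ha
  set b : ℝ → ℝ := fun v => ∫ y in {x | (ellMap γ v x, v, (1 : ℝ)) ∈ A}, c y ∂m1 with hb
  set a' : ℝ → ℝ := fun u => m1.real {x | (u, ellMap γ u (-x), (1 : ℝ)) ∈ A} with ha'
  set b' : ℝ → ℝ := fun u => ∫ y in {x | (u, ellMap γ u (-x), (1 : ℝ)) ∈ A}, c y ∂m1 with hb'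
  have sec : ∀ {T : Set (ℝ × ℝ)}, MeasurableSet T → ∀ v, MeasurableSet {x | (v, x) ∈ T} :=
    fun hT v => measurable_prodMk_left hT
  have mind : Measurable (Ap.indicator (1 : ℝ × ℝ → ℝ)) := measurable_one.indicator hApm
  have hR : ∀ᵐ p ∂volume.restrict (Eset γ), p ∈ {p : ℝ × ℝ | Ap.indicator 1 p =
      a p.2 + b p.2 * c (ellInv γ p.2 p.1)} := by
    refine (chord_ae_row γ (measurableSet_eq_fun mind (by fun_prop))).2 ?_
    filter_upwards [hrow] with v hv hRv
    filter_upwards [hstr _ _ (sec hT v) (sec hTm' v) (hv hRv)] with x hx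
    rw [ellInv_ellMap hRv]
    exact hx
  have hC : ∀ᵐ p ∂volume.restrict (Eset γ), p ∈ {p : ℝ × ℝ | Ap.indicator 1 p =
      a' p.1 + b' p.1 * c (-ellInv γ p.1 p.2)} := by
    refine (chord_ae γ (measurableSet_eq_fun mind (by fun_prop))).2 ?_
    filter_upwards [hcol] with u hu hRu
    have h1 := hstr _ _ (sec hT' u) (sec hTm u)
      ((hu hRu).symm hrev herg.1 (sec hTm u) (sec hT' u))
    have h2 := measurePreserving_neg_m1.quasiMeasurePreserving.ae h1
    filter_upwards [h2] with x hx
    rw [ellInv_ellMap hRu, ← hx]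
    have : -(-x) = x := neg_neg x
    by_cases hm : (u, ellMap γ u x, (1 : ℝ)) ∈ A
    · rw [indicator_of_mem (show (u, ellMap γ u x) ∈ Ap from hm), indicator_of_mem]
      · rfl
      · simpa using hm
    · rw [indicator_of_notMem (show (u, ellMap γ u x) ∉ Ap from hm), indicator_of_notMem]
      simpa using hm
  have hRC : ∀ᵐ p ∂volume.restrict (Eset γ), p ∈ {p : ℝ × ℝ | a p.2 + b p.2 * c (ellInv γ p.2 p.1) =
      a' p.1 + b' p.1 * (fun x => c (-x)) (ellInv γ p.1 p.2)} := by
    filter_upwards [hR, hC] with p h1 h2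
    exact h1.symm.trans h2
  have hzero : (∀ᵐ v, 0 < Rad γ v → b v = 0) ∧ (∀ᵐ u, 0 < Rad γ u → b' u = 0) := by
    rcases hcc with h0 | ⟨hpm, hhalf⟩
    · constructor <;> refine Filter.Eventually.of_forall fun v _ => ?_
      · simp [hb, h0]
      · simp [hb', h0]
    · have mc' : Measurable fun x => c (-x) := hc.comp measurable_neg
      refine ⟨main_global hs hk ma mb ma' mb' hc mc' ba bb ba' bb' (fun x => bc _) hpm hhalf hRC,
        main_global (c := fun x => c (-x)) (c' := c) hs hk ma' mb' ma mb mc' hc ba' bb' ba bb bc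
          (fun x => hpm _) ?_ ?_⟩
      · rw [← hhalf]
        have hcm : MeasurableSet {x | c x = 1} := measurableSet_eq_fun hc measurable_const
        have := measurePreserving_neg_m1.measure_preimage hcm.nullMeasurableSet
        rw [measureReal_def, measureReal_def, ← this]
        rfl
      · have hm : MeasurableSet {p : ℝ × ℝ | a p.2 + b p.2 * c (ellInv γ p.2 p.1) =
            a' p.1 + b' p.1 * (fun x => c (-x)) (ellInv γ p.1 p.2)} :=
          measurableSet_eq_fun (by fun_prop) (by fun_prop)
        filter_upwards [(ae_Eset_swap γ hm).1 hRC] with p hp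
        exact Eq.symm hp
  obtain ⟨z1, z2⟩ := hzero
  have z1' : ∀ᵐ p : ℝ × ℝ ∂volume.restrict (Eset γ), 0 < Rad γ p.2 → b p.2 = 0 :=
    ae_restrict_of_ae (Measure.quasiMeasurePreserving_snd (μ := (volume : Measure ℝ)).ae z1)
  have z2' : ∀ᵐ p : ℝ × ℝ ∂volume.restrict (Eset γ), 0 < Rad γ p.1 → b' p.1 = 0 :=
    ae_restrict_of_ae (Measure.quasiMeasurePreserving_fst (ν := (volume : Measure ℝ)).ae z2)
  have hmemE := ae_restrict_mem (μ := volume) (isOpen_Eset γ).measurableSet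
  refine null_or_conull_Eset (f := a) (g := a') ?_ ?_
  · filter_upwards [hR, z1', hmemE] with p h1 h2 h3
    rw [h2 (Rad_pos_of_mem (Eset_swap.1 h3)), zero_mul, add_zero] at h1
    exact h1
  · filter_upwards [hC, z2', hmemE] with p h1 h2 h3
    rw [h2 (Rad_pos_of_mem h3), zero_mul, add_zero] at h1
    exact h1

/-- if `m¹` is reversible for `q`, `γ/π` is irrational, there is an ergodic
measure for `Q` not mutually singular with `m²`, and `m¹` is ergodic for `q`, then `m²`
is ergodic for `Q`. -/
theorem alternating_walk_ergodic (γ : ℝ) (hγ : γ ∈ Ioo 0 Real.pi)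
    (q : Kernel ℝ ℝ) (hq : IsMarkovOnInterval q)
    (hrev : Reversible1 q)
    (hirr : Irrational (γ / Real.pi))
    (hmu : ∃ μ : Measure (ℝ × ℝ × ℝ), IsProbabilityMeasure μ ∧
      KErgodicMeasure μ (Qfun γ q) ∧ ¬ μ.MutuallySingular (m2 γ))
    (herg : KErgodicMeasure m1 (fun x => q x)) :
    KErgodicMeasure (m2 γ) (Qfun γ q) := by
  have hs : 0 < Real.sin γ := Real.sin_pos_of_pos_of_lt_pi hγ.1 hγ.2
  have hk : Real.cos γ ≠ 0 := by
    intro h0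
    obtain ⟨k, hk⟩ := Real.cos_eq_zero_iff.1 h0
    refine hirr ⟨((2 * k + 1 : ℤ) : ℚ) / 2, ?_⟩
    rw [hk]
    push_cast
    have := Real.pi_ne_zero
    field_simp
  have := hq.1
  refine ⟨m2_invariant γ herg.1, fun A hA hAi => ?_⟩
  have hvol := (invariant_set_pairs hs herg.1 hA hAi).2.2
  obtain ⟨hE0, hE1⟩ := Eset_bounds hs
  rw [m2_apply γ hA, ← hvol, Measure.restrict_apply (measurable_slice 1 hA)]
  rcases final_dichotomy hs hk hrev herg hA hAi with h0 | h0
  · left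
    rw [inter_comm, h0]; simp
  · right
    have h1 : volume ({p : ℝ × ℝ | (p.1, p.2, (1 : ℝ)) ∈ A} ∩ Eset γ) = volume (Eset γ) := by
      have := measure_inter_add_sdiff (μ := volume) (Eset γ) (measurable_slice 1 hA)
      rw [h0, add_zero, inter_comm] at this
      exact this
    rw [h1, ← two_mul, ← mul_assoc 2⁻¹, ENNReal.inv_mul_cancel (by simp) (by simp), one_mul,
      ENNReal.inv_mul_cancel hE0 hE1]
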